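/- H_n is a free right H^fn_n-module with basis {X^α f_Z : (α,Z) ∈ Π_n}. -/

import Mathlib

set_option maxHeartbeats 1000000

namespace HC

/-- Generators of the affine Hecke–Clifford superalgebra `H_n`. -/
inductive Gen (n : ℕ) : Type
  | X : Fin n → Gen n
  | Xinv : Fin n → Gen n
  | C : Fin n → Gen n
  | T : Fin (n - 1) → Gen n

/-- The node `i` of `Fin n`, for `i : Fin (n-1)` (1-based: the node `i`). -/
def lo {n : ℕ} (i : Fin (n - 1)) : Fin n :=
  ⟨i.val, by have := i.isLt; omega⟩

/-- The node `i+1` of `Fin n`, for `i : Fin (n-1)`. -/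
def hi {n : ℕ} (i : Fin (n - 1)) : Fin n :=
  ⟨i.val + 1, by have := i.isLt; omega⟩

variable (F : Type) [Field F]

/-- The free algebra on the generators. -/
abbrev FA (n : ℕ) : Type := FreeAlgebra F (Gen n)

noncomputable def fx {n : ℕ} (i : Fin n) : FA F n := FreeAlgebra.ι F (Gen.X i)
noncomputable def fxinv {n : ℕ} (i : Fin n) : FA F n := FreeAlgebra.ι F (Gen.Xinv i)
noncomputable def fc {n : ℕ} (i : Fin n) : FA F n := FreeAlgebra.ι F (Gen.C i)
noncomputable def ft {n : ℕ} (i : Fin (n - 1)) : FA F n := FreeAlgebra.ι F (Gen.T i)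

/-- The defining relations of the affine Hecke–Clifford superalgebra, with parameter
`q` and `ξ = q - q⁻¹`. -/
inductive Rel (q : F) (n : ℕ) : FA F n → FA F n → Prop
  | XXinv (i : Fin n) : Rel q n (fx F i * fxinv F i) 1
  | XinvX (i : Fin n) : Rel q n (fxinv F i * fx F i) 1
  | XX (i j : Fin n) : Rel q n (fx F i * fx F j) (fx F j * fx F i)
  | XiXi (i j : Fin n) : Rel q n (fxinv F i * fxinv F j) (fxinv F j * fxinv F i)
  | XXi (i j : Fin n) (h : i ≠ j) : Rel q n (fx F i * fxinv F j) (fxinv F j * fx F i)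
  | CC (i : Fin n) : Rel q n (fc F i * fc F i) 1
  | Canti (i j : Fin n) (h : i ≠ j) : Rel q n (fc F i * fc F j) (-(fc F j * fc F i))
  | CX (i : Fin n) : Rel q n (fc F i * fx F i) (fxinv F i * fc F i)
  | CXi (i : Fin n) : Rel q n (fc F i * fxinv F i) (fx F i * fc F i)
  | CXo (i j : Fin n) (h : i ≠ j) : Rel q n (fc F i * fx F j) (fx F j * fc F i)
  | CXio (i j : Fin n) (h : i ≠ j) : Rel q n (fc F i * fxinv F j) (fxinv F j * fc F i)
  | Tquad (i : Fin (n - 1)) : Rel q n (ft F i * ft F i) ((q - q⁻¹) • ft F i + 1)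
  | Tbraid (i j : Fin (n - 1)) (h : (j : ℕ) = (i : ℕ) + 1) :
      Rel q n (ft F i * ft F j * ft F i) (ft F j * ft F i * ft F j)
  | TTfar (i j : Fin (n - 1)) (h : (i : ℕ) + 1 < (j : ℕ)) :
      Rel q n (ft F i * ft F j) (ft F j * ft F i)
  | TC (i : Fin (n - 1)) : Rel q n (ft F i * fc F (lo i)) (fc F (hi i) * ft F i)
  | TCo (i : Fin (n - 1)) (j : Fin n) (h1 : j ≠ lo i) (h2 : j ≠ hi i) :
      Rel q n (ft F i * fc F j) (fc F j * ft F i)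
  | TXo (i : Fin (n - 1)) (j : Fin n) (h1 : j ≠ lo i) (h2 : j ≠ hi i) :
      Rel q n (ft F i * fx F j) (fx F j * ft F i)
  | TXio (i : Fin (n - 1)) (j : Fin n) (h1 : j ≠ lo i) (h2 : j ≠ hi i) :
      Rel q n (ft F i * fxinv F j) (fxinv F j * ft F i)
  | cross (i : Fin (n - 1)) :
      Rel q n ((ft F i + (q - q⁻¹) • (fc F (lo i) * fc F (hi i))) * fx F (lo i) * ft F i)
        (fx F (hi i))

/-- The affine Hecke–Clifford superalgebra `H_n` over `F` with parameter `q`. -/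
abbrev H (q : F) (n : ℕ) : Type := RingQuot (Rel F q n)

noncomputable def X (q : F) {n : ℕ} (i : Fin n) : H F q n :=
  RingQuot.mkAlgHom F (Rel F q n) (fx F i)

noncomputable def Xinv (q : F) {n : ℕ} (i : Fin n) : H F q n :=
  RingQuot.mkAlgHom F (Rel F q n) (fxinv F i)

noncomputable def C (q : F) {n : ℕ} (i : Fin n) : H F q n :=
  RingQuot.mkAlgHom F (Rel F q n) (fc F i)

noncomputable def T (q : F) {n : ℕ} (i : Fin (n - 1)) : H F q n :=
  RingQuot.mkAlgHom F (Rel F q n) (ft F i)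

/-- `q` is either a primitive root of unity of odd order (including `q = 1`)
or not a root of unity at all (and `q ≠ 0`). -/
def GoodParam (q : F) : Prop :=
  q ≠ 0 ∧ ((∃ m : ℕ, Odd m ∧ IsPrimitiveRoot q m) ∨ ∀ m : ℕ, 0 < m → q ^ m ≠ 1)

/-- `X_i^a` for an integer exponent `a ∈ ℤ`. -/
noncomputable def XZ (q : F) {n : ℕ} (i : Fin n) (a : ℤ) : H F q n :=
  if 0 ≤ a then X F q i ^ a.toNat else Xinv F q i ^ (-a).toNat

/-- The monomial `X^α = X_1^{α_1} ⋯ X_n^{α_n}` for `α ∈ ℤ^n`. -/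
noncomputable def Xmon (q : F) {n : ℕ} (α : Fin n → ℤ) : H F q n :=
  ((List.finRange n).map fun i => XZ F q i (α i)).prod

/-- The monomial `C^β = C_1^{β_1} ⋯ C_n^{β_n}` for `β ∈ {0,1}^n`. -/
noncomputable def Cmon (q : F) {n : ℕ} (β : Fin n → Bool) : H F q n :=
  ((List.finRange n).map fun i => if β i then C F q i else 1).prod

/-- The basic transposition `s_i = (i, i+1)` of `S_n`. -/
def s {n : ℕ} (i : Fin (n - 1)) : Equiv.Perm (Fin n) := Equiv.swap (lo i) (hi i)

/-- The Coxeter length (number of inversions) of a permutation of `Fin n`. -/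
def len {n : ℕ} (w : Equiv.Perm (Fin n)) : ℕ :=
  ((Finset.univ : Finset (Fin n × Fin n)).filter fun p => p.1 < p.2 ∧ w p.2 < w p.1).card

/-- `Tw` is the family of standard basis elements `T_w`, `w ∈ S_n`: it satisfies
`T_1 = 1`, `T_{s_i} = T_i`, and `T_{s_i w} = T_i T_w` whenever `ℓ(s_i w) = ℓ(w) + 1`.
These conditions determine the family uniquely. -/
def IsTFam (q : F) {n : ℕ} (Tw : Equiv.Perm (Fin n) → H F q n) : Prop :=
  Tw 1 = 1 ∧ (∀ i : Fin (n - 1), Tw (s i) = T F q i) ∧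
    ∀ (i : Fin (n - 1)) (w : Equiv.Perm (Fin n)),
      len (s i * w) = len w + 1 → Tw (s i * w) = T F q i * Tw w

/-- `h` is the quantum characteristic of `q`:  the smallest positive integer with
`q^{1-h} + q^{3-h} + ⋯ + q^{h-1} = 0`. -/
def qcharEq (q : F) (h : ℕ) : Prop :=
  0 < h ∧ (∑ k ∈ Finset.range h, q ^ (1 - (h : ℤ) + 2 * (k : ℤ))) = 0 ∧
    ∀ h' : ℕ, 0 < h' → h' < h →
      (∑ k ∈ Finset.range h', q ^ (1 - (h' : ℤ) + 2 * (k : ℤ))) ≠ 0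

/-- `i ∈ I = {0, 1, …, ℓ}` where `ℓ = (h-1)/2` (no condition if the quantum
characteristic is infinite). -/
def memI (q : F) (i : ℕ) : Prop := ∀ h : ℕ, qcharEq F q h → 2 * i + 1 ≤ h

/-- `q(i) = 2(q^{2i+1} + q^{-2i-1})/(q + q⁻¹)`. -/
noncomputable def qres (q : F) (i : ℕ) : F :=
  2 * (q ^ (2 * i + 1) + q⁻¹ ^ (2 * i + 1)) / (q + q⁻¹)

/-- Index of the block containing position `k` (0-based), for a composition given as a
list of parts. -/
def blk : List ℕ → ℕ → ℕ
  | [], _ => 0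
  | a :: rest, k => if k < a then 0 else blk rest (k - a) + 1

/-- Membership in the Young subgroup `S_μ ⊆ S_n`. -/
def InYoung {n : ℕ} (μ : List ℕ) (w : Equiv.Perm (Fin n)) : Prop :=
  ∀ k : Fin n, blk μ (w k).val = blk μ k.val

/-- `μ` is a composition of `n`. -/
def IsComposition (μ : List ℕ) (n : ℕ) : Prop := (∀ a ∈ μ, 0 < a) ∧ μ.sum = n

/-- The parabolic subalgebra generated by all `X_i^{±1}`, `C_i`, and the `T_j` with
`j` in a set `J` of admissible indices. -/
def parabolicJ (q : F) {n : ℕ} (J : Set (Fin (n - 1))) : Subalgebra F (H F q n) :=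
  Algebra.adjoin F
    ((Set.range fun i : Fin n => X F q i) ∪ (Set.range fun i : Fin n => Xinv F q i) ∪
      (Set.range fun i : Fin n => C F q i) ∪ {h | ∃ j ∈ J, h = T F q j})

/-- The parabolic subalgebra `H_μ` for a composition `μ`. -/
def parabolicC (q : F) {n : ℕ} (μ : List ℕ) : Subalgebra F (H F q n) :=
  parabolicJ F q {j | InYoung μ (s j)}

/-- The classical parabolic subalgebra `H^cl_μ`, generated by the `T_j` with `s_j ∈ S_μ`. -/
def clparC (q : F) {n : ℕ} (μ : List ℕ) : Subalgebra F (H F q n) :=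
  Algebra.adjoin F {h | ∃ j : Fin (n - 1), InYoung μ (s j) ∧ h = T F q j}

/-- The finite Hecke–Clifford subalgebra `H^fn_n`, generated by all `C_i` and `T_j`. -/
def Hfin (q : F) (n : ℕ) : Subalgebra F (H F q n) :=
  Algebra.adjoin F
    ((Set.range fun i : Fin n => C F q i) ∪ {h | ∃ j : Fin (n - 1), h = T F q j})

/-- `x` is a minimal length `(S_μ, S_ν)`-double coset representative. -/
def IsMinDC {n : ℕ} (μ ν : List ℕ) (x : Equiv.Perm (Fin n)) : Prop :=
  ∀ u v : Equiv.Perm (Fin n), InYoung μ u → InYoung ν v → len x ≤ len (u * x * v)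

/-- `w ∈ S_μ x S_ν`. -/
def InDC {n : ℕ} (μ ν : List ℕ) (x w : Equiv.Perm (Fin n)) : Prop :=
  ∃ u v : Equiv.Perm (Fin n), InYoung μ u ∧ InYoung ν v ∧ w = u * x * v

/-- A covering step in the Bruhat order: multiplication by a reflection increasing length. -/
def BruhatStep {n : ℕ} (v w : Equiv.Perm (Fin n)) : Prop :=
  ∃ a b : Fin n, a ≠ b ∧ w = Equiv.swap a b * v ∧ len v < len w

/-- The Bruhat order on `S_n`. -/
def BruhatLE {n : ℕ} : Equiv.Perm (Fin n) → Equiv.Perm (Fin n) → Prop :=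
  Relation.ReflTransGen BruhatStep

/-- The space of `A`-equivariant linear maps between two representations of the
`F`-algebra `A`. -/
def eqvHoms {A : Type} [Ring A] [Algebra F A] {M N : Type}
    [AddCommGroup M] [Module F M] [AddCommGroup N] [Module F N]
    (ρM : A →ₐ[F] Module.End F M) (ρN : A →ₐ[F] Module.End F N) :
    Submodule F (M →ₗ[F] N) where
  carrier := {f | ∀ (x : A) (m : M), f (ρM x m) = ρN x (f m)}
  add_mem' := by
    intro f g hf hg x m
    simp only [LinearMap.add_apply, hf x m, hg x m, map_add]
  zero_mem' := by
    intro x m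
    simp only [LinearMap.zero_apply, map_zero]
  smul_mem' := by
    intro c f hf x m
    simp only [LinearMap.smul_apply, hf x m, map_smul]

/-- `(E, ρE, ι)` is the module induced along the algebra morphism `φ : B →ₐ A` from
the `B`-representation `(M, ρ)`, i.e. `E = A ⊗_B M`, characterized by its universal
property. -/
def IsInducedAlong {A B : Type} [Ring A] [Ring B] [Algebra F A] [Algebra F B]
    (φ : B →ₐ[F] A) {M : Type} [AddCommGroup M] [Module F M]
    (ρ : B →ₐ[F] Module.End F M) {E : Type} [AddCommGroup E] [Module F E]
    (ρE : A →ₐ[F] Module.End F E) (ι : M →ₗ[F] E) : Prop :=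
  (∀ (b : B) (m : M), ι (ρ b m) = ρE (φ b) (ι m)) ∧
    ∀ (P : Type) [AddCommGroup P] [Module F P],
      ∀ (ρP : A →ₐ[F] Module.End F P) (f : M →ₗ[F] P),
        (∀ (b : B) (m : M), f (ρ b m) = ρP (φ b) (f m)) →
        ∃! g : E →ₗ[F] P,
          (∀ (x : A) (e : E), g (ρE x e) = ρP x (g e)) ∧ ∀ m : M, g (ι m) = f m

/-- `δ` is the grading automorphism of the superalgebra `H_n`
(identity on even generators, `-1` on the odd generators `C_i`). -/
def IsGradingAut (q : F) {n : ℕ} (δ : H F q n →ₐ[F] H F q n) : Prop :=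
  (∀ i : Fin n, δ (X F q i) = X F q i) ∧ (∀ i : Fin n, δ (Xinv F q i) = Xinv F q i) ∧
    (∀ i : Fin n, δ (C F q i) = -C F q i) ∧ ∀ i : Fin (n - 1), δ (T F q i) = T F q i

/-- `τ` is the antiautomorphism of `H_n` with `τ(T_i) = T_i + ξ C_i C_{i+1}`,
`τ(C_j) = C_j`, `τ(X_j) = X_j`. -/
def IsTauAntiAut (q : F) {n : ℕ} (τ : H F q n →ₗ[F] H F q n) : Prop :=
  Function.Bijective τ ∧ (∀ a b : H F q n, τ (a * b) = τ b * τ a) ∧ τ 1 = 1 ∧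
    (∀ i : Fin (n - 1),
      τ (T F q i) = T F q i + (q - q⁻¹) • (C F q (lo i) * C F q (hi i))) ∧
    (∀ j : Fin n, τ (C F q j) = C F q j) ∧ (∀ j : Fin n, τ (X F q j) = X F q j) ∧
    ∀ j : Fin n, τ (Xinv F q j) = Xinv F q j

/-- `ρ'` is the representation of the subalgebra `B` obtained from the
`H_ν`-representation `ρν` by twisting with the isomorphism `φ_{x⁻¹}`
(determined by `X_i ↦ X_{x⁻¹ i}`, `C_i ↦ C_{x⁻¹ i}`, `T_w ↦ T_{x⁻¹ w x}`). -/
def IsTwistedRep (q : F) {n : ℕ} (ν : List ℕ) (x : Equiv.Perm (Fin n))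
    (B : Subalgebra F (H F q n)) {M : Type} [AddCommGroup M] [Module F M]
    (ρν : ↥(parabolicC F q (n := n) ν) →ₐ[F] Module.End F M)
    (ρ' : ↥B →ₐ[F] Module.End F M) : Prop :=
  (∀ (i : Fin n) (a : ↥B) (b : ↥(parabolicC F q (n := n) ν)),
      (a : H F q n) = X F q i → (b : H F q n) = X F q (x⁻¹ i) → ρ' a = ρν b) ∧
  (∀ (i : Fin n) (a : ↥B) (b : ↥(parabolicC F q (n := n) ν)),
      (a : H F q n) = Xinv F q i → (b : H F q n) = Xinv F q (x⁻¹ i) → ρ' a = ρν b) ∧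
  (∀ (i : Fin n) (a : ↥B) (b : ↥(parabolicC F q (n := n) ν)),
      (a : H F q n) = C F q i → (b : H F q n) = C F q (x⁻¹ i) → ρ' a = ρν b) ∧
  ∀ (j j' : Fin (n - 1)) (a : ↥B) (b : ↥(parabolicC F q (n := n) ν)),
      lo j' = x⁻¹ (lo j) → (a : H F q n) = T F q j → (b : H F q n) = T F q j' → ρ' a = ρν b

/-- The element `f = a_d X_1^d + ⋯ + a_1 X_1 + a_0` of `H_n`. -/
noncomputable def felem (q : F) (n d : ℕ) (aa : ℕ → F) : H F q n :=
  if h : 0 < n then ∑ i ∈ Finset.range (d + 1), aa i • X F q (⟨0, h⟩ : Fin n) ^ i else 0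

/-- The conditions on the coefficients of `f`: degree `d ≥ 1`, monic, and
`a_i = a_0 a_{d-i}`. -/
def GoodPoly (d : ℕ) (aa : ℕ → F) : Prop :=
  1 ≤ d ∧ aa d = 1 ∧ (∀ i ≤ d, aa i = aa 0 * aa (d - i)) ∧ ∀ i : ℕ, d < i → aa i = 0

/-- The relation generating the two-sided ideal `I_f` of `H_n`. -/
inductive CycRel (q : F) (n d : ℕ) (aa : ℕ → F) : H F q n → H F q n → Prop
  | rel : CycRel q n d aa (felem F q n d aa) 0

/-- The cyclotomic Hecke–Clifford superalgebra `H_n^f = H_n / I_f`. -/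
abbrev Hf (q : F) (n d : ℕ) (aa : ℕ → F) : Type := RingQuot (CycRel F q n d aa)

/-- The canonical quotient map `H_n → H_n^f`. -/
noncomputable def cyc (q : F) (n d : ℕ) (aa : ℕ → F) : H F q n →ₐ[F] Hf F q n d aa :=
  RingQuot.mkAlgHom F (CycRel F q n d aa)

noncomputable def Xf (q : F) (n d : ℕ) (aa : ℕ → F) (i : Fin n) : Hf F q n d aa :=
  cyc F q n d aa (X F q i)
noncomputable def Xinvf (q : F) (n d : ℕ) (aa : ℕ → F) (i : Fin n) : Hf F q n d aa :=
  cyc F q n d aa (Xinv F q i)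
noncomputable def Cf (q : F) (n d : ℕ) (aa : ℕ → F) (i : Fin n) : Hf F q n d aa :=
  cyc F q n d aa (C F q i)
noncomputable def Tf (q : F) (n d : ℕ) (aa : ℕ → F) (i : Fin (n - 1)) : Hf F q n d aa :=
  cyc F q n d aa (T F q i)

/-- `e` is the canonical embedding `H_k^f → H_N^f` (shifting all indices by `sh`;
for `sh = 0` this is the standard identification of `H_k^f` with a subalgebra of
`H_N^f`). -/
def IsCycEmb (q : F) (k N d : ℕ) (aa : ℕ → F) (sh : ℕ)
    (e : Hf F q k d aa →ₐ[F] Hf F q N d aa) : Prop :=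
  (∀ (i : Fin k) (i' : Fin N), (i' : ℕ) = sh + (i : ℕ) →
      e (Xf F q k d aa i) = Xf F q N d aa i') ∧
  (∀ (i : Fin k) (i' : Fin N), (i' : ℕ) = sh + (i : ℕ) →
      e (Xinvf F q k d aa i) = Xinvf F q N d aa i') ∧
  (∀ (i : Fin k) (i' : Fin N), (i' : ℕ) = sh + (i : ℕ) →
      e (Cf F q k d aa i) = Cf F q N d aa i') ∧
  ∀ (j : Fin (k - 1)) (j' : Fin (N - 1)), (j' : ℕ) = sh + (j : ℕ) →
      e (Tf F q k d aa j) = Tf F q N d aa j'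

/-- `δ` is the grading automorphism of the superalgebra `H_n^f`. -/
def IsCycGrading (q : F) (n d : ℕ) (aa : ℕ → F)
    (δ : Hf F q n d aa →ₐ[F] Hf F q n d aa) : Prop :=
  (∀ i : Fin n, δ (Xf F q n d aa i) = Xf F q n d aa i) ∧
  (∀ i : Fin n, δ (Xinvf F q n d aa i) = Xinvf F q n d aa i) ∧
  (∀ i : Fin n, δ (Cf F q n d aa i) = -Cf F q n d aa i) ∧
  ∀ j : Fin (n - 1), δ (Tf F q n d aa j) = Tf F q n d aa j

/-- The elements `f_1 = f`, `f_{i+1} = (T_i + ξ C_i C_{i+1}) f_i T_i` of `H_n`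
(0-based indexing: `fseq k = f_{k+1}`). -/
noncomputable def fseq (q : F) (n d : ℕ) (aa : ℕ → F) : ℕ → H F q n
  | 0 => felem F q n d aa
  | k + 1 =>
    if h : k < n - 1 then
      (T F q (⟨k, h⟩ : Fin (n - 1)) +
          (q - q⁻¹) • (C F q (lo (⟨k, h⟩ : Fin (n - 1))) *
            C F q (hi (⟨k, h⟩ : Fin (n - 1))))) *
        fseq q n d aa k * T F q (⟨k, h⟩ : Fin (n - 1))
    else 0

/-- `f_Z = f_{z_1} ⋯ f_{z_u}` for `Z = {z_1 < ⋯ < z_u} ⊆ {1,…,n}` (0-based). -/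
noncomputable def fZ (q : F) (n d : ℕ) (aa : ℕ → F) (Z : Finset (Fin n)) : H F q n :=
  ((Z.sort (· ≤ ·)).map fun z => fseq F q n d aa (z : ℕ)).prod

/-- The index set `Π_n`: pairs `(α, Z)` with `Z ⊆ {1,…,n}` and `α ∈ ℤ^n` such that
`0 ≤ α_i < d` whenever `i ∉ Z`. -/
def PiIdx (n d : ℕ) : Type :=
  {p : (Fin n → ℤ) × Finset (Fin n) // ∀ i : Fin n, i ∉ p.2 → 0 ≤ p.1 i ∧ p.1 i < d}

/-!
Linear independence of the monomials `X ^ α` over `H^fn_n` comes from an action of `H_n` on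
`K ⊗ H_n`, where `K` is the field of fractions of the Laurent polynomials: `X_i` and `C_i` act by
multiplication and by a Clifford twist of the inversion `X_i ↦ X_i⁻¹`, and `T_i` by a
Demazure–Lusztig operator. The difference of the two sides of each defining relation semi-commutes
with multiplication by the variables and kills `1 ⊗ a`, hence vanishes; evaluating at `1 ⊗ 1` then
separates the `X ^ α`, and the commutation relations show that they span.

The element `f_k` is `X_k ^ d`, plus terms in the first `k` variables of degree strictly between
`0` and `d` in `X_k`, plus a unit of `H^fn_n`. Compare exponent vectors by the distances of their
coordinates from `[0, d)`, starting from the last coordinate. Then `X ^ α f_Z` has the leading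
exponent obtained from `α` by adding `d` to `α_z` for those `z ∈ Z` with `α_z ≥ 0`, and this is a
bijection from `Π_n` onto `ℤ ^ n`, so the family is triangular, with unit leading coefficients,
with respect to the basis of the `X ^ α`.
-/

section RingIdentities

variable {F R : Type*} [CommRing F] [Ring R] [Algebra F R] {ξ : F}

theorem mul_mul_of_mul_eq {a b c : R} (h : a * b = c) (z : R) : a * (b * z) = c * z := by
  rw [← mul_assoc, h]

theorem hecke_mul_sub {U : R} (hU : U * U = ξ • U + 1) : U * (U - ξ • 1) = 1 := by
  rw [mul_sub, hU, mul_smul_comm, mul_one, add_sub_cancel_left]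

theorem hecke_sub_mul {U : R} (hU : U * U = ξ • U + 1) : (U - ξ • 1) * U = 1 := by
  rw [sub_mul, hU, smul_mul_assoc, one_mul, add_sub_cancel_left]

/-- The unit given by an element `U` satisfying the quadratic relation `U² = ξ U + 1`. -/
@[simps]
def heckeUnit {U : R} (hU : U * U = ξ • U + 1) : Rˣ where
  val := U
  inv := U - ξ • 1
  val_inv := hecke_mul_sub hU
  inv_val := hecke_sub_mul hU

section CliffordPair

variable {U E C₁ C₂ : R}

theorem hecke_mul_clifford (hU : U * U = ξ • U + 1) (hC : U * C₁ = C₂ * U) :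
    U * C₂ = C₁ * U - ξ • C₁ + ξ • C₂ := by
  have conj : U * C₂ = (ξ • U + 1) * C₁ * (U - ξ • 1) := by
    rw [← hU, mul_assoc U, hC, ← mul_assoc, mul_assoc _ U, hecke_mul_sub hU, mul_one]
  have conj_inv : U * C₁ * (U - ξ • 1) = C₂ := by
    rw [hC, mul_assoc, hecke_mul_sub hU, mul_one]
  rw [conj, add_mul, add_mul, smul_mul_assoc, smul_mul_assoc, conj_inv, one_mul, mul_sub,
    mul_smul_comm, mul_one]
  abel

theorem cliffordPair_sq (hanti : C₁ * C₂ = -(C₂ * C₁)) (h₁ : C₁ * C₁ = 1) (h₂ : C₂ * C₂ = 1) :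
    C₁ * C₂ * (C₁ * C₂) = -1 := by
  rw [mul_assoc, hanti, mul_neg, mul_mul_of_mul_eq h₂, one_mul, mul_neg, h₁]

theorem hecke_mul_cliffordPair (hC₁ : U * C₁ = C₂ * U)
    (hC₂ : U * C₂ = C₁ * U - ξ • C₁ + ξ • C₂) (hanti : C₁ * C₂ = -(C₂ * C₁))
    (h₂ : C₂ * C₂ = 1) : U * (C₁ * C₂) = -(C₁ * C₂ * U) + ξ • (C₁ * C₂) + ξ • 1 := by
  rw [← mul_assoc, hC₁, mul_assoc, hC₂, mul_add, mul_sub, mul_smul_comm,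
    mul_smul_comm, h₂, ← mul_assoc, hanti, neg_mul, smul_neg, neg_neg, sub_eq_add_neg]

theorem heckeStar_sq (hU : U * U = ξ • U + 1) (hE : U * E = -(E * U) + ξ • E + ξ • 1)
    (hEE : E * E = -1) : (U + ξ • E) * (U + ξ • E) = ξ • (U + ξ • E) + 1 := by
  simp only [mul_add, add_mul, smul_mul_assoc, mul_smul_comm, hU, hE, hEE]
  module

end CliffordPair

section CrossRelation

variable {U E X₁ X₂ Y₁ Y₂ : R}

theorem heckeStar_mul_lo (hU : U * U = ξ • U + 1) (hX : (U + ξ • E) * X₁ * U = X₂) :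
    (U + ξ • E) * X₁ = X₂ * (U - ξ • 1) := by
  rw [← hX, mul_assoc _ U, hecke_mul_sub hU, mul_one]

theorem heckeStar_mul_hi (hS : (U + ξ • E) * (U + ξ • E) = ξ • (U + ξ • E) + 1)
    (hX : (U + ξ • E) * X₁ * U = X₂) : (U + ξ • E) * X₂ = X₁ * U + ξ • X₂ := by
  nth_rw 1 [← hX]
  rw [mul_assoc, ← mul_assoc, hS, add_mul, smul_mul_assoc, ← mul_assoc, hX, one_mul, add_comm]

theorem hecke_mul_inv_hi (hS : (U + ξ • E) * (U + ξ • E) = ξ • (U + ξ • E) + 1)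
    (hX : (U + ξ • E) * X₁ * U = X₂) (h₁ : Y₁ * X₁ = 1) (h₂ : X₂ * Y₂ = 1) :
    U * Y₂ = Y₁ * (U + ξ • E - ξ • 1) := by
  calc U * Y₂ = Y₁ * ((U + ξ • E - ξ • 1) * (U + ξ • E)) * X₁ * U * Y₂ := by
        rw [hecke_sub_mul hS, mul_one, h₁, one_mul]
    _ = Y₁ * (U + ξ • E - ξ • 1) * ((U + ξ • E) * X₁ * U * Y₂) := by simp only [mul_assoc]
    _ = Y₁ * (U + ξ • E - ξ • 1) := by rw [hX, h₂, mul_one]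

theorem hecke_mul_inv_lo (hU : U * U = ξ • U + 1)
    (hS : (U + ξ • E) * (U + ξ • E) = ξ • (U + ξ • E) + 1)
    (hY : U * Y₂ = Y₁ * (U + ξ • E - ξ • 1)) :
    U * Y₁ = Y₂ * U + ξ • Y₁ + ξ • (Y₂ * E) := by
  have hY₁ : U * Y₂ * (U + ξ • E) = Y₁ := by
    rw [hY, mul_assoc, hecke_sub_mul hS, mul_one]
  calc U * Y₁ = (U * U) * Y₂ * (U + ξ • E) := by rw [mul_assoc U U, mul_assoc U, hY₁]
    _ = ξ • (U * Y₂ * (U + ξ • E)) + Y₂ * (U + ξ • E) := by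
      rw [hU, add_mul, add_mul, smul_mul_assoc, smul_mul_assoc, one_mul]
    _ = Y₂ * U + ξ • Y₁ + ξ • (Y₂ * E) := by rw [hY₁, mul_add, mul_smul_comm]; abel

theorem heckeStar_mul_mul_eq (hU : U * U = ξ • U + 1)
    (hX : U * X₁ = X₂ * U - ξ • X₂ - ξ • (Y₁ * E)) (hE : E * X₁ = Y₁ * E) :
    (U + ξ • E) * X₁ * U = X₂ := by
  have hlo : (U + ξ • E) * X₁ = X₂ * (U - ξ • 1) := by
    rw [add_mul, smul_mul_assoc, hX, hE, mul_sub, mul_smul_comm, mul_one, sub_add_cancel]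
  rw [hlo, mul_assoc, hecke_sub_mul hU, mul_one]

end CrossRelation

section Quadratic

variable {U E X₁ X₂ Y₁ Y₂ : R}

theorem quadratic_commute_lo (hx₁ : U * X₁ = X₂ * U - ξ • X₂ - ξ • (Y₁ * E))
    (hx₂ : U * X₂ = X₁ * U + ξ • X₂ - ξ • (Y₂ * E))
    (hy₁ : U * Y₁ = Y₂ * U + ξ • Y₁ + ξ • (Y₂ * E))
    (hE : U * E = -(E * U) + ξ • E + ξ • 1) (hEE : E * E = -1) :
    (U * U - (ξ • U + 1)) * X₁ = X₁ * (U * U - (ξ • U + 1)) := by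
  linear_combination (norm := (simp only [mul_add, add_mul, mul_sub, sub_mul, smul_mul_assoc,
    mul_smul_comm, mul_assoc, mul_one, one_mul, mul_neg]; module))
    U * hx₁ + hx₂ * (U - ξ • 1) - ξ • hy₁ * E - ξ • hx₁ - ξ • (Y₂ * hE) - (ξ * ξ) • (Y₂ * hEE)

theorem quadratic_commute_hi (hx₁ : U * X₁ = X₂ * U - ξ • X₂ - ξ • (Y₁ * E))
    (hx₂ : U * X₂ = X₁ * U + ξ • X₂ - ξ • (Y₂ * E))
    (hy₂ : U * Y₂ = Y₁ * U - ξ • Y₁ + ξ • (Y₁ * E))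
    (hE : U * E = -(E * U) + ξ • E + ξ • 1) (hEE : E * E = -1) :
    (U * U - (ξ • U + 1)) * X₂ = X₂ * (U * U - (ξ • U + 1)) := by
  linear_combination (norm := (simp only [mul_add, add_mul, mul_sub, sub_mul, smul_mul_assoc,
    mul_smul_comm, mul_assoc, mul_one, one_mul, mul_neg]; module))
    U * hx₂ + hx₁ * U - ξ • hy₂ * E - ξ • (Y₁ * hE) - (ξ * ξ) • (Y₁ * hEE)

end Quadratic

/-- The relations of the finite Hecke–Clifford algebra of rank three, except the braid relation. -/
structure RankThree (ξ : F) (U V C₁ C₂ C₃ : R) : Prop where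
  U_sq : U * U = ξ • U + 1
  V_sq : V * V = ξ • V + 1
  U_mul_C₁ : U * C₁ = C₂ * U
  U_mul_C₃ : U * C₃ = C₃ * U
  V_mul_C₁ : V * C₁ = C₁ * V
  V_mul_C₂ : V * C₂ = C₃ * V
  C₁_sq : C₁ * C₁ = 1
  C₂_sq : C₂ * C₂ = 1
  C₃_sq : C₃ * C₃ = 1
  C₂_mul_C₁ : C₂ * C₁ = -(C₁ * C₂)
  C₃_mul_C₁ : C₃ * C₁ = -(C₁ * C₃)
  C₃_mul_C₂ : C₃ * C₂ = -(C₂ * C₃)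

namespace RankThree

variable {U V C₁ C₂ C₃ X₁ X₂ X₃ : R}

theorem U_star_sq (h : RankThree ξ U V C₁ C₂ C₃) :
    (U + ξ • (C₁ * C₂)) * (U + ξ • (C₁ * C₂)) = ξ • (U + ξ • (C₁ * C₂)) + 1 := by
  have hanti : C₁ * C₂ = -(C₂ * C₁) := by rw [h.C₂_mul_C₁, neg_neg]
  have hC₂ := hecke_mul_clifford h.U_sq h.U_mul_C₁
  exact heckeStar_sq h.U_sq (hecke_mul_cliffordPair h.U_mul_C₁ hC₂ hanti h.C₂_sq)
    (cliffordPair_sq hanti h.C₁_sq h.C₂_sq)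

theorem V_star_sq (h : RankThree ξ U V C₁ C₂ C₃) :
    (V + ξ • (C₂ * C₃)) * (V + ξ • (C₂ * C₃)) = ξ • (V + ξ • (C₂ * C₃)) + 1 := by
  have hanti : C₂ * C₃ = -(C₃ * C₂) := by rw [h.C₃_mul_C₂, neg_neg]
  have hC₃ := hecke_mul_clifford h.V_sq h.V_mul_C₂
  exact heckeStar_sq h.V_sq (hecke_mul_cliffordPair h.V_mul_C₂ hC₃ hanti h.C₃_sq)
    (cliffordPair_sq hanti h.C₂_sq h.C₃_sq)

theorem semiconjBy_cliffordPair (h : RankThree ξ U V C₁ C₂ C₃) :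
    SemiconjBy (U * V) (C₁ * C₂) (C₂ * C₃) := by
  have hU : SemiconjBy U (C₁ * C₃) (C₂ * C₃) := SemiconjBy.mul_right h.U_mul_C₁ h.U_mul_C₃
  exact hU.mul_left (SemiconjBy.mul_right h.V_mul_C₁ h.V_mul_C₂)

theorem semiconjBy_cliffordPair_inv (h : RankThree ξ U V C₁ C₂ C₃) :
    SemiconjBy ((V - ξ • 1) * (U - ξ • 1)) (C₂ * C₃) (C₁ * C₂) :=
  SemiconjBy.units_inv_symm_left (a := heckeUnit h.U_sq * heckeUnit h.V_sq)
    h.semiconjBy_cliffordPair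

theorem braid_star (h : RankThree ξ U V C₁ C₂ C₃) :
    (U + ξ • (C₁ * C₂)) * (V + ξ • (C₂ * C₃)) * (U + ξ • (C₁ * C₂)) -
      (V + ξ • (C₂ * C₃)) * (U + ξ • (C₁ * C₂)) * (V + ξ • (C₂ * C₃)) =
    U * V * U - V * U * V := by
  have hU := hecke_mul_clifford h.U_sq h.U_mul_C₁
  have hV := hecke_mul_clifford h.V_sq h.V_mul_C₂
  simp only [mul_add, add_mul, mul_sub, sub_mul, smul_mul_assoc, mul_smul_comm, mul_assoc, mul_one,
    one_mul, neg_mul, mul_neg, smul_neg, smul_add, smul_sub, h.U_sq, h.V_sq, hU, hV,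
    h.U_mul_C₃, h.V_mul_C₂, h.C₂_sq, h.C₃_sq, h.C₂_mul_C₁, h.C₃_mul_C₂,
    mul_mul_of_mul_eq h.U_mul_C₁, mul_mul_of_mul_eq hU, mul_mul_of_mul_eq h.U_mul_C₃,
    mul_mul_of_mul_eq h.V_mul_C₁, mul_mul_of_mul_eq h.V_mul_C₂, mul_mul_of_mul_eq hV,
    mul_mul_of_mul_eq h.C₁_sq, mul_mul_of_mul_eq h.C₂_sq, mul_mul_of_mul_eq h.C₃_sq,
    mul_mul_of_mul_eq h.C₂_mul_C₁, mul_mul_of_mul_eq h.C₃_mul_C₁, mul_mul_of_mul_eq h.C₃_mul_C₂]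
  module

theorem braid_star_inv_inv (h : RankThree ξ U V C₁ C₂ C₃) :
    (U + ξ • (C₁ * C₂)) * (V - ξ • 1) * (U - ξ • 1) -
      (V - ξ • 1) * (U - ξ • 1) * (V + ξ • (C₂ * C₃)) = U * V * U - V * U * V := by
  linear_combination (norm := (simp only [mul_add, add_mul, mul_sub, sub_mul, smul_mul_assoc,
    mul_smul_comm, mul_assoc, mul_one, one_mul]; module))
    -(ξ • h.semiconjBy_cliffordPair_inv.eq) + ξ • h.V_sq - ξ • h.U_sq

theorem braid_inv_star (h : RankThree ξ U V C₁ C₂ C₃) :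
    (U - ξ • 1) * (V + ξ • (C₂ * C₃)) * U - V * (U + ξ • (C₁ * C₂)) * (V - ξ • 1) =
      U * V * U - V * U * V := by
  have hE : (U - ξ • 1) * (C₂ * C₃) * U = V * (C₁ * C₂) * (V - ξ • 1) := by
    calc (U - ξ • 1) * (C₂ * C₃) * U
        = (U - ξ • 1) * (C₂ * C₃ * (U * V)) * (V - ξ • 1) := by
          simp only [mul_assoc, hecke_mul_sub h.V_sq, mul_one]
      _ = (U - ξ • 1) * U * V * (C₁ * C₂) * (V - ξ • 1) := by
          rw [← h.semiconjBy_cliffordPair.eq]; simp only [mul_assoc]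
      _ = V * (C₁ * C₂) * (V - ξ • 1) := by rw [hecke_sub_mul h.U_sq, one_mul]
  linear_combination (norm := (simp only [mul_add, add_mul, mul_sub, sub_mul, smul_mul_assoc,
    mul_smul_comm, mul_assoc, mul_one, one_mul]; module)) ξ • hE

theorem braid_mul_star (h : RankThree ξ U V C₁ C₂ C₃) :
    U * V * (U + ξ • (C₁ * C₂)) - (V + ξ • (C₂ * C₃)) * U * V = U * V * U - V * U * V := by
  rw [mul_add, mul_smul_comm, h.semiconjBy_cliffordPair.eq, add_mul, add_mul, smul_mul_assoc,
    smul_mul_assoc, mul_assoc (C₂ * C₃), add_sub_add_right_eq_sub]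

section Variables

variable (h : RankThree ξ U V C₁ C₂ C₃) (hX₂ : (U + ξ • (C₁ * C₂)) * X₁ * U = X₂)
  (hX₃ : (V + ξ • (C₂ * C₃)) * X₂ * V = X₃)
  (hX₁V : (V + ξ • (C₂ * C₃)) * X₁ = X₁ * (V + ξ • (C₂ * C₃)))
  (hX₃U : (U + ξ • (C₁ * C₂)) * X₃ = X₃ * (U + ξ • (C₁ * C₂)))

include h hX₂ hX₃ hX₁V hX₃U

theorem braid_mul_X₁ : (U * V * U - V * U * V) * X₁ = X₃ * (U * V * U - V * U * V) := by
  have hU := heckeStar_mul_lo h.U_sq hX₂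
  have hV := heckeStar_mul_lo h.V_sq hX₃
  have h₁ := h.braid_star
  have h₂ := h.braid_star_inv_inv
  generalize U + ξ • (C₁ * C₂) = Us at *
  generalize V + ξ • (C₂ * C₃) = Vs at *
  linear_combination (norm := (simp only [mul_sub, sub_mul, smul_mul_assoc,
    mul_smul_comm, mul_assoc, mul_one, one_mul]; module))
    -h₁ * X₁ + X₃ * h₂ + Us * Vs * hU + Us * hV * (U - ξ • 1)
      + hX₃U * (V - ξ • 1) * (U - ξ • 1) - Vs * Us * hX₁V - Vs * hU * Vs - hV * (U - ξ • 1) * Vs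

theorem braid_mul_X₂ : (U * V * U - V * U * V) * X₂ = X₂ * (U * V * U - V * U * V) := by
  have hU := heckeStar_mul_lo h.U_sq hX₂
  have hU' := heckeStar_mul_hi h.U_star_sq hX₂
  have hV := heckeStar_mul_lo h.V_sq hX₃
  have hV' := heckeStar_mul_hi h.V_star_sq hX₃
  have h₁ := h.braid_star
  have h₂ := h.braid_inv_star
  generalize U + ξ • (C₁ * C₂) = Us at *
  generalize V + ξ • (C₂ * C₃) = Vs at *
  linear_combination (norm := (simp only [mul_add, add_mul, mul_sub, sub_mul, smul_mul_assoc,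
    mul_smul_comm, mul_assoc, mul_one, one_mul]; module))
    -h₁ * X₂ + X₂ * h₂ + Us * Vs * hU' + Us * hX₁V * U + hU * Vs * U + ξ • (Us * hV)
      + ξ • hX₃U * (V - ξ • 1) - Vs * Us * hV - Vs * hX₃U * (V - ξ • 1) - hV' * Us * (V - ξ • 1)

theorem braid_mul_X₃ : (U * V * U - V * U * V) * X₃ = X₁ * (U * V * U - V * U * V) := by
  have hU' := heckeStar_mul_hi h.U_star_sq hX₂
  have hV := heckeStar_mul_lo h.V_sq hX₃
  have hV' := heckeStar_mul_hi h.V_star_sq hX₃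
  have h₁ := h.braid_star
  have h₂ := h.braid_mul_star
  have h₃ := hecke_sub_mul h.V_sq
  have h₄ := h.U_star_sq
  generalize U + ξ • (C₁ * C₂) = Us at *
  generalize V + ξ • (C₂ * C₃) = Vs at *
  linear_combination (norm := (simp only [mul_add, add_mul, mul_sub, sub_mul, smul_mul_assoc,
    mul_smul_comm, mul_assoc, mul_one, one_mul]; module))
    -h₁ * X₃ + X₁ * h₂ + Us * Vs * hX₃U + Us * hV' * Us + hU' * V * Us + ξ • hX₃U * Us
      - Vs * Us * hV' - Vs * hU' * V - hX₁V * U * V - ξ • (hV * V) - ξ • (Vs * hX₃U)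
      - ξ • (hV' * Us) + ξ • (X₃ * h₄) - ξ • (X₃ * h₃)

end Variables

end RankThree

end RingIdentities

section NodeTransposition

variable {n : ℕ}

theorem lo_lt_hi (i : Fin (n - 1)) : lo i < hi i :=
  Nat.lt_succ_self i

theorem lo_ne_hi (i : Fin (n - 1)) : lo i ≠ hi i :=
  (lo_lt_hi i).ne

theorem s_lo (i : Fin (n - 1)) : s i (lo i) = hi i := Equiv.swap_apply_left _ _

theorem s_hi (i : Fin (n - 1)) : s i (hi i) = lo i := Equiv.swap_apply_right _ _

theorem s_of_ne {i : Fin (n - 1)} {j : Fin n} (hlo : j ≠ lo i) (hhi : j ≠ hi i) : s i j = j :=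
  Equiv.swap_apply_of_ne_of_ne hlo hhi

end NodeTransposition

section RationalFunctions

/-- Laurent polynomials in `n` variables. -/
abbrev Laurent (n : ℕ) : Type := AddMonoidAlgebra F (Fin n → ℤ)

/-- The field of rational functions in `n` variables, as the fraction field of the Laurent
polynomials, so that automorphisms of the lattice `ℤⁿ` act on it. -/
def RatFn (n : ℕ) : Type := FractionRing (Laurent F n)

namespace RatFn

variable {n : ℕ}

noncomputable instance : Field (RatFn F n) := inferInstanceAs (Field (FractionRing (Laurent F n)))

noncomputable instance : Algebra F (RatFn F n) :=
  inferInstanceAs (Algebra F (FractionRing (Laurent F n)))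

noncomputable instance : Algebra (Laurent F n) (RatFn F n) :=
  inferInstanceAs (Algebra (Laurent F n) (FractionRing (Laurent F n)))

instance : IsFractionRing (Laurent F n) (RatFn F n) :=
  inferInstanceAs (IsFractionRing (Laurent F n) (FractionRing (Laurent F n)))

instance : IsScalarTower F (Laurent F n) (RatFn F n) :=
  inferInstanceAs (IsScalarTower F (Laurent F n) (FractionRing (Laurent F n)))

/-- The Laurent monomial with exponent vector `α`, as a rational function. -/
noncomputable def monomial (α : Fin n → ℤ) : RatFn F n :=
  algebraMap (Laurent F n) (RatFn F n) (AddMonoidAlgebra.single α 1)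

/-- The `i`-th variable, as a rational function. -/
noncomputable def var (i : Fin n) : RatFn F n := monomial F (Pi.single i 1)

theorem monomial_zero : monomial F (0 : Fin n → ℤ) = 1 := by
  rw [monomial, ← AddMonoidAlgebra.one_def, map_one]

theorem monomial_add (α β : Fin n → ℤ) :
    monomial F (α + β) = monomial F α * monomial F β := by
  rw [monomial, monomial, monomial, ← map_mul, AddMonoidAlgebra.single_mul_single, mul_one]

theorem monomial_neg (α : Fin n → ℤ) : monomial F (-α) = (monomial F α)⁻¹ := by
  apply eq_inv_of_mul_eq_one_left
  rw [← monomial_add, neg_add_cancel, monomial_zero]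

theorem linearIndependent_monomial : LinearIndependent F (monomial F (n := n)) :=
  (AddMonoidAlgebra.basis (Fin n → ℤ) F).linearIndependent.map'
    (IsScalarTower.toAlgHom F (Laurent F n) (RatFn F n)).toLinearMap
    (LinearMap.ker_eq_bot.2 (IsFractionRing.injective (Laurent F n) (RatFn F n)))

theorem monomial_injective : Function.Injective (monomial F (n := n)) :=
  (linearIndependent_monomial F).injective

theorem monomial_ne_zero (α : Fin n → ℤ) : monomial F α ≠ 0 :=
  (linearIndependent_monomial F).ne_zero α

theorem var_ne_zero (i : Fin n) : var F i ≠ 0 := monomial_ne_zero F _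

theorem var_sub_ne_zero {i j : Fin n} (hij : i ≠ j) : var F i - var F j ≠ 0 := by
  intro h
  have := congrFun (monomial_injective F (sub_eq_zero.1 h)) i
  simp [Pi.single_eq_of_ne hij] at this

theorem var_mul_sub_one_ne_zero {i j : Fin n} (hij : i ≠ j) : var F i * var F j - 1 ≠ 0 := by
  intro h
  rw [var, var, ← monomial_add, ← monomial_zero] at h
  have := congrFun (monomial_injective F (sub_eq_zero.1 h)) i
  simp [Pi.single_eq_of_ne hij] at this

section Generators

variable {F}

theorem monomial_mem {K : IntermediateField F (RatFn F n)} (hK : ∀ i, var F i ∈ K)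
    (α : Fin n → ℤ) : monomial F α ∈ K := by
  let G : AddSubgroup (Fin n → ℤ) :=
    { carrier := {α | monomial F α ∈ K}
      add_mem' := fun {α β} hα hβ => by
        simpa only [Set.mem_ofPred_eq, monomial_add] using K.mul_mem hα hβ
      zero_mem' := by simpa only [Set.mem_ofPred_eq, monomial_zero] using K.one_mem
      neg_mem' := fun {α} hα => by
        simpa only [Set.mem_ofPred_eq, monomial_neg] using K.inv_mem hα }
  have hα : ∑ i, α i • Pi.single i 1 ∈ G := G.sum_mem fun i _ => G.zsmul_mem (hK i) _
  have key : ∑ i, α i • (Pi.single i 1 : Fin n → ℤ) = α := by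
    simp only [← Pi.single_smul, smul_eq_mul, mul_one, Finset.univ_sum_single]
  rwa [key] at hα

theorem algebraMap_laurent_mem {K : IntermediateField F (RatFn F n)} (hK : ∀ i, var F i ∈ K)
    (p : Laurent F n) : algebraMap (Laurent F n) (RatFn F n) p ∈ K := by
  induction p using AddMonoidAlgebra.induction_linear with
  | zero => simp
  | add p r hp hr => simpa using K.add_mem hp hr
  | single α c =>
    have hsingle : AddMonoidAlgebra.single α c = c • AddMonoidAlgebra.single α (1 : F) := by simp
    rw [hsingle, ← IsScalarTower.coe_toAlgHom' F, map_smul]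
    exact K.smul_mem (monomial_mem hK α)

theorem eq_top_of_var_mem {K : IntermediateField F (RatFn F n)} (hK : ∀ i, var F i ∈ K) :
    K = ⊤ := by
  refine eq_top_iff.2 fun g _ => ?_
  obtain ⟨p, r, -, rfl⟩ := IsFractionRing.div_surjective (A := Laurent F n) g
  exact K.div_mem (algebraMap_laurent_mem hK p) (algebraMap_laurent_mem hK r)

theorem algHom_ext {φ ψ : RatFn F n →ₐ[F] RatFn F n} (h : ∀ i, φ (var F i) = ψ (var F i)) :
    φ = ψ := by
  let K : IntermediateField F (RatFn F n) :=
    { AlgHom.equalizer φ ψ with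
      inv_mem' := fun g (hg : φ g = ψ g) => by
        change φ g⁻¹ = ψ g⁻¹
        rw [map_inv₀, map_inv₀, hg] }
  exact AlgHom.ext fun g => (eq_top_of_var_mem (K := K) h ▸ trivial : g ∈ K)

end Generators

/-- The automorphism induced by an automorphism of the lattice of exponents. -/
noncomputable def latticeAut (e : (Fin n → ℤ) ≃+ (Fin n → ℤ)) : RatFn F n ≃ₐ[F] RatFn F n :=
  IsFractionRing.algEquivOfAlgEquiv (AddMonoidAlgebra.domCongr F F e)

theorem latticeAut_monomial (e : (Fin n → ℤ) ≃+ (Fin n → ℤ)) (α : Fin n → ℤ) :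
    latticeAut F e (monomial F α) = monomial F (e α) := by
  simp [latticeAut, monomial]

/-- The automorphism inverting the `i`-th variable. -/
noncomputable def flipVar (i : Fin n) : RatFn F n ≃ₐ[F] RatFn F n :=
  latticeAut F (AddEquiv.piCongrRight (Function.update (fun _ => .refl ℤ) i (.neg ℤ)))

/-- The automorphism permuting the variables by `w`. -/
noncomputable def perm (w : Equiv.Perm (Fin n)) : RatFn F n ≃ₐ[F] RatFn F n :=
  latticeAut F (.arrowCongr w (.refl ℤ))

theorem flipVar_var_self (i : Fin n) : flipVar F i (var F i) = (var F i)⁻¹ := by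
  rw [flipVar, var, latticeAut_monomial, ← monomial_neg]
  congr 1
  ext k
  obtain rfl | hk := eq_or_ne k i <;> simp [*]

theorem flipVar_var_of_ne {i j : Fin n} (hij : i ≠ j) : flipVar F i (var F j) = var F j := by
  rw [flipVar, var, latticeAut_monomial]
  congr 1
  ext k
  obtain rfl | hk := eq_or_ne k i <;> simp [*]

theorem perm_var (w : Equiv.Perm (Fin n)) (j : Fin n) : perm F w (var F j) = var F (w j) := by
  rw [perm, var, latticeAut_monomial, var]
  congr 1
  ext k
  simp [AddEquiv.arrowCongr, Pi.single_apply, Equiv.symm_apply_eq]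

variable {F}

theorem flipVar_flipVar (i : Fin n) (g : RatFn F n) : flipVar F i (flipVar F i g) = g := by
  refine AlgHom.congr_fun (φ₁ := ((flipVar F i).trans (flipVar F i)).toAlgHom)
    (φ₂ := .id F _) (algHom_ext fun l => ?_) g
  obtain rfl | hl := eq_or_ne i l
  · simp [flipVar_var_self]
  · simp [flipVar_var_of_ne F hl]

theorem flipVar_comm (i j : Fin n) (g : RatFn F n) :
    flipVar F i (flipVar F j g) = flipVar F j (flipVar F i g) := by
  refine AlgHom.congr_fun (φ₁ := ((flipVar F j).trans (flipVar F i)).toAlgHom)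
    (φ₂ := ((flipVar F i).trans (flipVar F j)).toAlgHom) (algHom_ext fun l => ?_) g
  by_cases hi : i = l <;> by_cases hj : j = l <;>
    simp [hi, hj, flipVar_var_self, flipVar_var_of_ne F]

theorem perm_flipVar (w : Equiv.Perm (Fin n)) (j : Fin n) (g : RatFn F n) :
    perm F w (flipVar F j g) = flipVar F (w j) (perm F w g) := by
  refine AlgHom.congr_fun (φ₁ := ((flipVar F j).trans (perm F w)).toAlgHom)
    (φ₂ := ((perm F w).trans (flipVar F (w j))).toAlgHom) (algHom_ext fun l => ?_) g
  obtain rfl | hl := eq_or_ne j l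
  · simp [flipVar_var_self, perm_var]
  · simp [flipVar_var_of_ne F hl, flipVar_var_of_ne F (w.injective.ne hl), perm_var]

theorem perm_mul (v w : Equiv.Perm (Fin n)) (g : RatFn F n) :
    perm F (v * w) g = perm F v (perm F w g) :=
  AlgHom.congr_fun (φ₁ := (perm F (v * w)).toAlgHom)
    (φ₂ := ((perm F w).trans (perm F v)).toAlgHom) (algHom_ext fun l => by simp [perm_var]) g

end RatFn

end RationalFunctions

section Relations

/-- Elements of an algebra satisfying the relations of the finite Hecke–Clifford superalgebra
with parameter `ξ`. -/
structure HeckeCliffordFamily (ξ : F) (n : ℕ) (A : Type*) [Ring A] [Algebra F A] where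
  C : Fin n → A
  T : Fin (n - 1) → A
  C_sq : ∀ i, C i * C i = 1
  C_anti : ∀ {i j}, i ≠ j → C i * C j = -(C j * C i)
  T_sq : ∀ i, T i * T i = ξ • T i + 1
  T_braid : ∀ {i j : Fin (n - 1)}, (j : ℕ) = (i : ℕ) + 1 → T i * T j * T i = T j * T i * T j
  T_commute_T : ∀ {i j : Fin (n - 1)}, (i : ℕ) + 1 < (j : ℕ) → Commute (T i) (T j)
  T_mul_C_lo : ∀ i, T i * C (lo i) = C (hi i) * T i
  T_commute_C : ∀ {i j}, j ≠ lo i → j ≠ hi i → Commute (T i) (C j)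

/-- Elements of an algebra satisfying the relations of the affine Hecke–Clifford superalgebra
with parameter `ξ`; the `X_i` are recorded as units. -/
structure AffineHeckeCliffordFamily (ξ : F) (n : ℕ) (A : Type*) [Ring A] [Algebra F A] extends
    HeckeCliffordFamily F ξ n A where
  X : Fin n → Aˣ
  X_commute : ∀ i j, Commute (X i) (X j)
  C_mul_X : ∀ i, C i * X i = ↑(X i)⁻¹ * C i
  C_commute_X : ∀ {i j}, i ≠ j → Commute (C i) (X j : A)
  T_commute_X : ∀ {i j}, j ≠ lo i → j ≠ hi i → Commute (T i) (X j : A)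
  T_cross : ∀ i, (T i + ξ • (C (lo i) * C (hi i))) * X (lo i) * T i = X (hi i)

variable {F} {ξ : F} {n : ℕ} {A : Type*} [Ring A] [Algebra F A]

namespace HeckeCliffordFamily

variable (D : HeckeCliffordFamily F ξ n A)

/-- The product `C_i C_{i+1}`. -/
def cliffordPair (i : Fin (n - 1)) : A := D.C (lo i) * D.C (hi i)

/-- The element `T_i + ξ C_i C_{i+1}` occurring in the mixed relation. -/
def Tstar (i : Fin (n - 1)) : A := D.T i + ξ • D.cliffordPair i

/-- The subalgebra generated by the `C_i` and the `T_i`. -/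
def finiteSubalgebra : Subalgebra F A := Algebra.adjoin F (Set.range D.C ∪ {h | ∃ j, h = D.T j})

theorem T_mul_C_hi (i : Fin (n - 1)) :
    D.T i * D.C (hi i) = D.C (lo i) * D.T i - ξ • D.C (lo i) + ξ • D.C (hi i) :=
  hecke_mul_clifford (D.T_sq i) (D.T_mul_C_lo i)

theorem T_mul_cliffordPair (i : Fin (n - 1)) :
    D.T i * D.cliffordPair i = -(D.cliffordPair i * D.T i) + ξ • D.cliffordPair i + ξ • 1 :=
  hecke_mul_cliffordPair (D.T_mul_C_lo i) (D.T_mul_C_hi i) (D.C_anti (lo_ne_hi i)) (D.C_sq _)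

theorem cliffordPair_sq (i : Fin (n - 1)) : D.cliffordPair i * D.cliffordPair i = -1 :=
  HC.cliffordPair_sq (D.C_anti (lo_ne_hi i)) (D.C_sq _) (D.C_sq _)

theorem Tstar_sq (i : Fin (n - 1)) : D.Tstar i * D.Tstar i = ξ • D.Tstar i + 1 :=
  heckeStar_sq (D.T_sq i) (D.T_mul_cliffordPair i) (D.cliffordPair_sq i)

theorem cliffordPair_mul_C_lo (i : Fin (n - 1)) :
    D.cliffordPair i * D.C (lo i) = -D.C (hi i) := by
  rw [cliffordPair, D.C_anti (lo_ne_hi i), neg_mul, mul_assoc, D.C_sq, mul_one]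

theorem cliffordPair_mul_C_hi (i : Fin (n - 1)) : D.cliffordPair i * D.C (hi i) = D.C (lo i) := by
  rw [cliffordPair, mul_assoc, D.C_sq, mul_one]

theorem C_hi_mul_cliffordPair (i : Fin (n - 1)) :
    D.C (hi i) * D.cliffordPair i = -D.C (lo i) := by
  rw [cliffordPair, D.C_anti (lo_ne_hi i), mul_neg, ← mul_assoc, D.C_sq, one_mul]

theorem C_lo_mul_cliffordPair (i : Fin (n - 1)) : D.C (lo i) * D.cliffordPair i = D.C (hi i) := by
  rw [cliffordPair, ← mul_assoc, D.C_sq, one_mul]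

theorem cliffordPair_commute_C {i : Fin (n - 1)} {j : Fin n} (hlo : j ≠ lo i)
    (hhi : j ≠ hi i) : Commute (D.cliffordPair i) (D.C j) := by
  rw [commute_iff_eq, cliffordPair, mul_assoc, D.C_anti hhi.symm, mul_neg, ← mul_assoc,
    D.C_anti hlo.symm, neg_mul, neg_neg, mul_assoc]

theorem C_mem (i : Fin n) : D.C i ∈ D.finiteSubalgebra :=
  Algebra.subset_adjoin (Or.inl ⟨i, rfl⟩)

theorem T_mem (i : Fin (n - 1)) : D.T i ∈ D.finiteSubalgebra :=
  Algebra.subset_adjoin (Or.inr ⟨i, rfl⟩)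

theorem cliffordPair_mem (i : Fin (n - 1)) : D.cliffordPair i ∈ D.finiteSubalgebra :=
  mul_mem (D.C_mem _) (D.C_mem _)

theorem Tstar_mem (i : Fin (n - 1)) : D.Tstar i ∈ D.finiteSubalgebra :=
  add_mem (D.T_mem i) (D.finiteSubalgebra.smul_mem (D.cliffordPair_mem i) ξ)

end HeckeCliffordFamily

namespace AffineHeckeCliffordFamily

variable (D : AffineHeckeCliffordFamily F ξ n A)

theorem C_mul_X_inv (i : Fin n) : D.C i * ↑(D.X i)⁻¹ = D.X i * D.C i := by
  rw [Units.mul_inv_eq_iff_eq_mul, mul_assoc, D.C_mul_X, Units.mul_inv_cancel_left]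

theorem Tstar_mul_X_lo (i : Fin (n - 1)) :
    D.Tstar i * D.X (lo i) = D.X (hi i) * (D.T i - ξ • 1) :=
  heckeStar_mul_lo (D.T_sq i) (D.T_cross i)

theorem Tstar_mul_X_hi (i : Fin (n - 1)) :
    D.Tstar i * D.X (hi i) = D.X (lo i) * D.T i + ξ • (D.X (hi i) : A) :=
  heckeStar_mul_hi (D.Tstar_sq i) (D.T_cross i)

theorem cliffordPair_mul_X_lo (i : Fin (n - 1)) :
    D.cliffordPair i * D.X (lo i) = ↑(D.X (lo i))⁻¹ * D.cliffordPair i := by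
  rw [HeckeCliffordFamily.cliffordPair, mul_assoc, D.C_commute_X (lo_ne_hi i).symm,
    ← mul_assoc, D.C_mul_X, mul_assoc]

theorem cliffordPair_mul_X_hi (i : Fin (n - 1)) :
    D.cliffordPair i * D.X (hi i) = ↑(D.X (hi i))⁻¹ * D.cliffordPair i := by
  rw [HeckeCliffordFamily.cliffordPair, mul_assoc, D.C_mul_X, ← mul_assoc,
    (D.C_commute_X (lo_ne_hi i)).units_inv_right.eq, mul_assoc]

theorem T_mul_X_lo (i : Fin (n - 1)) : D.T i * D.X (lo i) =
    D.X (hi i) * D.T i - ξ • (D.X (hi i) : A) - ξ • (↑(D.X (lo i))⁻¹ * D.cliffordPair i) := by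
  have h := D.Tstar_mul_X_lo i
  rw [HeckeCliffordFamily.Tstar, add_mul, smul_mul_assoc, cliffordPair_mul_X_lo, mul_sub,
    mul_smul_comm, mul_one] at h
  rw [← h, add_sub_cancel_right]

theorem T_mul_X_hi (i : Fin (n - 1)) : D.T i * D.X (hi i) =
    D.X (lo i) * D.T i + ξ • (D.X (hi i) : A) - ξ • (↑(D.X (hi i))⁻¹ * D.cliffordPair i) := by
  have h := D.Tstar_mul_X_hi i
  rw [HeckeCliffordFamily.Tstar, add_mul, smul_mul_assoc, cliffordPair_mul_X_hi] at h
  rw [← h, add_sub_cancel_right]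

theorem T_mul_X_inv_hi (i : Fin (n - 1)) :
    D.T i * ↑(D.X (hi i))⁻¹ = ↑(D.X (lo i))⁻¹ * (D.Tstar i - ξ • 1) :=
  hecke_mul_inv_hi (D.Tstar_sq i) (D.T_cross i) (Units.inv_mul _) (Units.mul_inv _)

theorem T_mul_X_inv_lo (i : Fin (n - 1)) : D.T i * ↑(D.X (lo i))⁻¹ =
    ↑(D.X (hi i))⁻¹ * D.T i + ξ • (↑(D.X (lo i))⁻¹ : A)
      + ξ • (↑(D.X (hi i))⁻¹ * D.cliffordPair i) :=
  hecke_mul_inv_lo (D.T_sq i) (D.Tstar_sq i) (D.T_mul_X_inv_hi i)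

end AffineHeckeCliffordFamily

end Relations

section StandardFamily

variable {F} (q : F) (n : ℕ)

theorem mk_eq_mk_of_rel {x y : FA F n} (h : Rel F q n x y) :
    RingQuot.mkAlgHom F (Rel F q n) x = RingQuot.mkAlgHom F (Rel F q n) y :=
  RingQuot.mkAlgHom_rel F h

/-- The generators of `H_n`. -/
noncomputable def standardFamily : AffineHeckeCliffordFamily F (q - q⁻¹) n (H F q n) where
  C := C F q
  T := T F q
  X i := ⟨X F q i, Xinv F q i,
    by simpa [X, Xinv] using mk_eq_mk_of_rel q n (.XXinv i),
    by simpa [X, Xinv] using mk_eq_mk_of_rel q n (.XinvX i)⟩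
  C_sq i := by simpa [C] using mk_eq_mk_of_rel q n (.CC i)
  C_anti h := by simpa [C] using mk_eq_mk_of_rel q n (.Canti _ _ h)
  T_sq i := by simpa [T] using mk_eq_mk_of_rel q n (.Tquad i)
  T_braid h := by simpa [T] using mk_eq_mk_of_rel q n (.Tbraid _ _ h)
  T_commute_T h := by simpa [T, commute_iff_eq] using mk_eq_mk_of_rel q n (.TTfar _ _ h)
  T_mul_C_lo i := by simpa [C, T] using mk_eq_mk_of_rel q n (.TC i)
  T_commute_C hlo hhi := by
    simpa [C, T, commute_iff_eq] using mk_eq_mk_of_rel q n (.TCo _ _ hlo hhi)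
  X_commute i j := Units.ext <| by simpa [X] using mk_eq_mk_of_rel q n (.XX i j)
  C_mul_X i := by simpa [C, X, Xinv] using mk_eq_mk_of_rel q n (.CX i)
  C_commute_X h := by simpa [C, X, commute_iff_eq] using mk_eq_mk_of_rel q n (.CXo _ _ h)
  T_commute_X hlo hhi := by
    simpa [T, X, commute_iff_eq] using mk_eq_mk_of_rel q n (.TXo _ _ hlo hhi)
  T_cross i := by simpa [C, T, X] using mk_eq_mk_of_rel q n (.cross i)

variable {q n} {R : Type*} [Ring R] [Algebra F R]

/-- A family satisfying the relations of `H_n` defines a homomorphism out of `H_n`. -/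
noncomputable def AffineHeckeCliffordFamily.lift
    (D : AffineHeckeCliffordFamily F (q - q⁻¹) n R) : H F q n →ₐ[F] R :=
  RingQuot.liftAlgHom F ⟨FreeAlgebra.lift F fun g => match g with
    | Gen.X i => D.X i
    | Gen.Xinv i => ↑(D.X i)⁻¹
    | Gen.C i => D.C i
    | Gen.T i => D.T i, by
    intro x y h
    induction h <;>
      simp only [fx, fxinv, fc, ft, map_mul, map_add, map_neg, map_smul, map_one,
        FreeAlgebra.lift_ι_apply]
    case XXinv i => exact (D.X i).mul_inv
    case XinvX i => exact (D.X i).inv_mul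
    case XX i j => exact congrArg Units.val (D.X_commute i j)
    case XiXi i j => exact congrArg Units.val (D.X_commute i j).inv_inv
    case XXi i j h => exact congrArg Units.val (D.X_commute i j).inv_right
    case CC i => exact D.C_sq i
    case Canti i j h => exact D.C_anti h
    case CX i => exact D.C_mul_X i
    case CXi i => exact D.C_mul_X_inv i
    case CXo i j h => exact D.C_commute_X h
    case CXio i j h => exact (D.C_commute_X h).units_inv_right
    case Tquad i => exact D.T_sq i
    case Tbraid i j h => exact D.T_braid h
    case TTfar i j h => exact D.T_commute_T h
    case TC i => exact D.T_mul_C_lo i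
    case TCo i j hlo hhi => exact D.T_commute_C hlo hhi
    case TXo i j hlo hhi => exact D.T_commute_X hlo hhi
    case TXio i j hlo hhi => exact (D.T_commute_X hlo hhi).units_inv_right
    case cross i => exact D.T_cross i⟩

variable (D : AffineHeckeCliffordFamily F (q - q⁻¹) n R)

theorem AffineHeckeCliffordFamily.lift_X (i : Fin n) :
    D.lift ((standardFamily q n).X i) = D.X i := by
  simp [lift, standardFamily, HC.X, fx]

theorem AffineHeckeCliffordFamily.lift_C (i : Fin n) :
    D.lift ((standardFamily q n).C i) = D.C i := by
  simp [lift, standardFamily, HC.C, fc]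

theorem AffineHeckeCliffordFamily.lift_T (i : Fin (n - 1)) :
    D.lift ((standardFamily q n).T i) = D.T i := by
  simp [lift, standardFamily, HC.T, ft]

end StandardFamily

section Coefficients

namespace RatFn

variable {F} {n : ℕ} (ξ : F)

/-- The coefficient `ξ x_{i+1} / (x_{i+1} - x_i)` of the Demazure–Lusztig operators. -/
noncomputable def diffCoeff (i : Fin (n - 1)) : RatFn F n :=
  ξ • (var F (hi i) / (var F (hi i) - var F (lo i)))

/-- The coefficient `ξ / (x_i x_{i+1} - 1)` of the Demazure–Lusztig operators. -/
noncomputable def prodCoeff (i : Fin (n - 1)) : RatFn F n :=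
  ξ • (var F (lo i) * var F (hi i) - 1)⁻¹

theorem flipVar_hi_diffCoeff (i : Fin (n - 1)) :
    flipVar F (hi i) (diffCoeff ξ i) = -prodCoeff ξ i := by
  have hhi := var_ne_zero F (hi i)
  have hden : (var F (hi i))⁻¹ - var F (lo i) =
      -(var F (lo i) * var F (hi i) - 1) / var F (hi i) := by
    field_simp
    ring
  rw [diffCoeff, prodCoeff, map_smul, map_div₀, map_sub, flipVar_var_self,
    flipVar_var_of_ne F (lo_ne_hi i).symm, ← smul_neg, hden]
  congr 1
  field_simp

theorem flipVar_hi_prodCoeff (i : Fin (n - 1)) :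
    flipVar F (hi i) (prodCoeff ξ i) = -diffCoeff ξ i := by
  rw [← neg_eq_iff_eq_neg, ← map_neg, ← flipVar_hi_diffCoeff ξ, flipVar_flipVar]

theorem flipVar_lo_diffCoeff (i : Fin (n - 1)) :
    flipVar F (lo i) (diffCoeff ξ i) = prodCoeff ξ i + algebraMap F _ ξ := by
  have hprod := var_mul_sub_one_ne_zero F (lo_ne_hi i)
  have hlo := var_ne_zero F (lo i)
  have hden : var F (hi i) - (var F (lo i))⁻¹ =
      (var F (lo i) * var F (hi i) - 1) / var F (lo i) := by
    field_simp
  rw [diffCoeff, prodCoeff, map_smul, map_div₀, map_sub, flipVar_var_self,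
    flipVar_var_of_ne F (lo_ne_hi i), Algebra.algebraMap_eq_smul_one, ← smul_add, hden,
    div_div_eq_mul_div, inv_eq_one_div, div_add' _ _ _ hprod]
  congr 2
  ring

theorem flipVar_lo_prodCoeff (i : Fin (n - 1)) :
    flipVar F (lo i) (prodCoeff ξ i) = diffCoeff ξ i - algebraMap F _ ξ := by
  rw [eq_sub_iff_add_eq, ← (flipVar F (lo i)).commutes, ← map_add,
    ← flipVar_lo_diffCoeff ξ, flipVar_flipVar]

theorem flipVar_diffCoeff_of_ne {i : Fin (n - 1)} {j : Fin n} (hlo : j ≠ lo i) (hhi : j ≠ hi i) :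
    flipVar F j (diffCoeff ξ i) = diffCoeff ξ i := by
  rw [diffCoeff, map_smul, map_div₀, map_sub, flipVar_var_of_ne F hlo, flipVar_var_of_ne F hhi]

theorem flipVar_prodCoeff_of_ne {i : Fin (n - 1)} {j : Fin n} (hlo : j ≠ lo i) (hhi : j ≠ hi i) :
    flipVar F j (prodCoeff ξ i) = prodCoeff ξ i := by
  rw [prodCoeff, map_smul, map_inv₀, map_sub, map_mul, flipVar_var_of_ne F hlo,
    flipVar_var_of_ne F hhi, map_one]

theorem perm_diffCoeff {i : Fin (n - 1)} {w : Equiv.Perm (Fin n)} (hlo : w (lo i) = lo i)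
    (hhi : w (hi i) = hi i) : perm F w (diffCoeff ξ i) = diffCoeff ξ i := by
  rw [diffCoeff, map_smul, map_div₀, map_sub, perm_var, perm_var, hlo, hhi]

theorem perm_prodCoeff {i : Fin (n - 1)} {w : Equiv.Perm (Fin n)} (hlo : w (lo i) = lo i)
    (hhi : w (hi i) = hi i) : perm F w (prodCoeff ξ i) = prodCoeff ξ i := by
  rw [prodCoeff, map_smul, map_inv₀, map_sub, map_mul, perm_var, perm_var, hlo, hhi, map_one]

theorem diffCoeff_mul_var_sub (i : Fin (n - 1)) :
    diffCoeff ξ i * (var F (hi i) - var F (lo i)) = ξ • var F (hi i) := by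
  rw [diffCoeff, smul_mul_assoc, div_mul_cancel₀ _ (var_sub_ne_zero F (lo_ne_hi i).symm)]

theorem diffCoeff_mul_inv_sub (i : Fin (n - 1)) :
    diffCoeff ξ i * ((var F (lo i))⁻¹ - (var F (hi i))⁻¹) = ξ • (var F (lo i))⁻¹ := by
  have hsub := var_sub_ne_zero F (lo_ne_hi i).symm
  have hlo := var_ne_zero F (lo i)
  have hhi := var_ne_zero F (hi i)
  rw [diffCoeff, smul_mul_assoc, inv_sub_inv hlo hhi]
  congr 1
  field_simp

theorem prodCoeff_mul_lo_sub (i : Fin (n - 1)) :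
    prodCoeff ξ i * (var F (lo i) - (var F (hi i))⁻¹) = ξ • (var F (hi i))⁻¹ := by
  have hprod := var_mul_sub_one_ne_zero F (lo_ne_hi i)
  have hhi := var_ne_zero F (hi i)
  rw [prodCoeff, smul_mul_assoc]
  congr 1
  field_simp

theorem prodCoeff_mul_hi_sub (i : Fin (n - 1)) :
    prodCoeff ξ i * (var F (hi i) - (var F (lo i))⁻¹) = ξ • (var F (lo i))⁻¹ := by
  have hprod := var_mul_sub_one_ne_zero F (lo_ne_hi i)
  have hlo := var_ne_zero F (lo i)
  rw [prodCoeff, smul_mul_assoc]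
  congr 1
  field_simp

end RatFn

end Coefficients

section Operators

open TensorProduct RatFn

variable {F} {ξ : F} {n : ℕ} {A : Type*} [Ring A] [Algebra F A]

variable (A) in
/-- Multiplication by a rational function, as an operator on `A`-valued rational functions. -/
noncomputable def mulOp : RatFn F n →ₐ[F] Module.End F (RatFn F n ⊗[F] A) :=
  Algebra.lsmul F F (RatFn F n ⊗[F] A)

theorem mulOp_tmul (g k : RatFn F n) (a : A) : mulOp A g (k ⊗ₜ a) = (g * k) ⊗ₜ a := rfl

theorem mulOp_neg_mul (g : RatFn F n) (L : Module.End F (RatFn F n ⊗[F] A)) :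
    mulOp A (-g) * L = -(mulOp A g * L) :=
  (congrArg (· * L) (map_neg (mulOp A) g)).trans (neg_mul (mulOp A g) L)

/-- An operator intertwining the variables with their images under `σ` intertwines all rational
functions, so it is determined by its values on constants. -/
theorem eq_zero_of_semiconjBy_var {L : Module.End F (RatFn F n ⊗[F] A)}
    (σ : RatFn F n ≃ₐ[F] RatFn F n)
    (hL : ∀ i, SemiconjBy L (mulOp A (var F i)) (mulOp A (σ (var F i))))
    (h_one : ∀ a : A, L (1 ⊗ₜ a) = 0) : L = 0 := by
  let K : IntermediateField F (RatFn F n) :=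
    { carrier := {g | SemiconjBy L (mulOp A g) (mulOp A (σ g))}
      mul_mem' := fun {g h} hg hh => by
        simpa only [Set.mem_ofPred_eq, map_mul] using SemiconjBy.mul_right hg hh
      add_mem' := fun {g h} hg hh => by
        simpa only [Set.mem_ofPred_eq, map_add] using SemiconjBy.add_right hg hh
      algebraMap_mem' := fun c => by
        simp only [Set.mem_ofPred_eq, AlgEquiv.commutes, AlgHom.commutes]
        exact Algebra.commute_algebraMap_right c L
      inv_mem' := fun g (hg : SemiconjBy L (mulOp A g) (mulOp A (σ g))) => by
        obtain rfl | hg₀ := eq_or_ne g 0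
        · simp
        · have hσg : σ g ≠ 0 := (map_ne_zero σ).2 hg₀
          let u (h : RatFn F n) (hh : h ≠ 0) :=
            Units.map (MonoidHomClass.toMonoidHom (mulOp (n := n) A)) (.mk0 h hh)
          have hinv := SemiconjBy.units_inv_right (x := u g hg₀) (y := u (σ g) hσg) hg
          simpa [u, ← map_inv] using hinv }
  have hK : K = ⊤ := eq_top_of_var_mem hL
  refine TensorProduct.ext' fun k a => ?_
  have hk : SemiconjBy L (mulOp A k) (mulOp A (σ k)) := (hK ▸ trivial : k ∈ K)
  have := LinearMap.congr_fun hk.eq (1 ⊗ₜ a)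
  rwa [Module.End.mul_apply, Module.End.mul_apply, mulOp_tmul, mul_one, h_one, map_zero] at this

namespace HeckeCliffordFamily

variable (D : HeckeCliffordFamily F ξ n A)

/-- The operator by which `C_i` acts on `A`-valued rational functions. -/
noncomputable def opC (i : Fin n) : Module.End F (RatFn F n ⊗[F] A) :=
  TensorProduct.map (flipVar F i).toLinearMap (LinearMap.mulLeft F (D.C i))

/-- The operator by which `C_i C_{i+1}` acts on `A`-valued rational functions. -/
noncomputable def opPair (i : Fin (n - 1)) : Module.End F (RatFn F n ⊗[F] A) :=
  D.opC (lo i) * D.opC (hi i)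

/-- The permutation `w` of the variables, combined with multiplication by `b` on the values. -/
noncomputable def permOp (w : Equiv.Perm (Fin n)) (b : A) : Module.End F (RatFn F n ⊗[F] A) :=
  TensorProduct.map (perm F w).toLinearMap (LinearMap.mulLeft F b)

/-- The Demazure–Lusztig operator by which `T_i` acts on `A`-valued rational functions. On
constants it is multiplication by `T_i`, and the coefficients are forced by the relations between
`T_i` and the variables. -/
noncomputable def opT (i : Fin (n - 1)) : Module.End F (RatFn F n ⊗[F] A) :=
  permOp (s i) (D.T i) + mulOp A (diffCoeff ξ i) * (1 - permOp (s i) 1) +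
    mulOp A (prodCoeff ξ i) * (D.opPair i - permOp (s i) (D.cliffordPair i))

theorem opC_tmul (i : Fin n) (k : RatFn F n) (a : A) :
    D.opC i (k ⊗ₜ a) = flipVar F i k ⊗ₜ (D.C i * a) := rfl

theorem opPair_tmul (i : Fin (n - 1)) (k : RatFn F n) (a : A) :
    D.opPair i (k ⊗ₜ a) = flipVar F (lo i) (flipVar F (hi i) k) ⊗ₜ (D.cliffordPair i * a) := by
  rw [opPair, Module.End.mul_apply, opC_tmul, opC_tmul, cliffordPair, mul_assoc]

theorem permOp_tmul (w : Equiv.Perm (Fin n)) (b : A) (k : RatFn F n) (a : A) :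
    permOp w b (k ⊗ₜ a) = perm F w k ⊗ₜ[F] (b * a) := rfl

theorem opT_tmul (i : Fin (n - 1)) (k : RatFn F n) (a : A) :
    D.opT i (k ⊗ₜ a) = perm F (s i) k ⊗ₜ (D.T i * a)
      + (diffCoeff ξ i * (k - perm F (s i) k)) ⊗ₜ a
      + (prodCoeff ξ i * (flipVar F (lo i) (flipVar F (hi i) k) - perm F (s i) k)) ⊗ₜ
        (D.cliffordPair i * a) := by
  simp only [opT, LinearMap.add_apply, LinearMap.sub_apply, Module.End.mul_apply,
    Module.End.one_apply, permOp_tmul, opPair_tmul, one_mul, ← TensorProduct.sub_tmul, mulOp_tmul]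

theorem opC_one_tmul (i : Fin n) (a : A) : D.opC i (1 ⊗ₜ a) = 1 ⊗ₜ (D.C i * a) := by
  rw [opC_tmul, map_one]

theorem opT_one_tmul (i : Fin (n - 1)) (a : A) : D.opT i (1 ⊗ₜ a) = 1 ⊗ₜ (D.T i * a) := by
  simp [opT_tmul]

section CliffordRelations

theorem opC_sq (i : Fin n) : D.opC i * D.opC i = 1 :=
  TensorProduct.ext' fun k a => by
    simp only [Module.End.mul_apply, opC_tmul, flipVar_flipVar, ← mul_assoc, C_sq, one_mul,
      Module.End.one_apply]

theorem opC_anti {i j : Fin n} (h : i ≠ j) : D.opC i * D.opC j = -(D.opC j * D.opC i) :=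
  TensorProduct.ext' fun k a => by
    simp only [LinearMap.neg_apply, Module.End.mul_apply, opC_tmul, ← mul_assoc]
    rw [flipVar_comm, D.C_anti h, neg_mul, TensorProduct.tmul_neg]

theorem opC_semiconjBy_mulOp (i : Fin n) (g : RatFn F n) :
    SemiconjBy (D.opC i) (mulOp A g) (mulOp A (flipVar F i g)) :=
  TensorProduct.ext' fun k a => by
    simp only [Module.End.mul_apply, mulOp_tmul, opC_tmul, map_mul]

theorem opPair_semiconjBy_mulOp (i : Fin (n - 1)) (g : RatFn F n) :
    SemiconjBy (D.opPair i) (mulOp A g) (mulOp A (flipVar F (lo i) (flipVar F (hi i) g))) :=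
  (D.opC_semiconjBy_mulOp _ _).mul_left (D.opC_semiconjBy_mulOp _ _)

theorem opPair_mul_var_lo (i : Fin (n - 1)) :
    D.opPair i * mulOp A (var F (lo i)) = mulOp A (var F (lo i))⁻¹ * D.opPair i := by
  rw [(D.opPair_semiconjBy_mulOp _ _).eq, flipVar_var_of_ne F (lo_ne_hi i).symm, flipVar_var_self]

theorem opPair_sq (i : Fin (n - 1)) : D.opPair i * D.opPair i = -1 :=
  HC.cliffordPair_sq (D.opC_anti (lo_ne_hi i)) (D.opC_sq _) (D.opC_sq _)

theorem opT_mul_opC_lo (i : Fin (n - 1)) :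
    D.opT i * D.opC (lo i) = D.opC (hi i) * D.opT i := by
  refine TensorProduct.ext' fun k a => ?_
  simp only [Module.End.mul_apply, opC_tmul, opT_tmul, map_add, map_mul, map_sub,
    flipVar_hi_diffCoeff, flipVar_hi_prodCoeff, perm_flipVar, s_lo, ← mul_assoc, D.T_mul_C_lo,
    D.cliffordPair_mul_C_lo, D.C_hi_mul_cliffordPair, flipVar_comm (hi i) (lo i),
    flipVar_flipVar, neg_mul, TensorProduct.neg_tmul, TensorProduct.tmul_neg, neg_neg]
  abel

theorem opT_mul_opC_hi (i : Fin (n - 1)) : D.opT i * D.opC (hi i) =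
    D.opC (lo i) * D.opT i - ξ • D.opC (lo i) + ξ • D.opC (hi i) := by
  refine TensorProduct.ext' fun k a => ?_
  simp only [LinearMap.add_apply, LinearMap.sub_apply, LinearMap.smul_apply,
    Module.End.mul_apply, opC_tmul, opT_tmul, map_add, map_mul, map_sub, flipVar_lo_diffCoeff,
    flipVar_lo_prodCoeff, perm_flipVar, s_hi, ← mul_assoc, D.T_mul_C_hi, D.cliffordPair_mul_C_hi,
    D.C_lo_mul_cliffordPair, flipVar_flipVar, add_mul, sub_mul, mul_sub, TensorProduct.add_tmul,
    TensorProduct.sub_tmul, TensorProduct.tmul_add, TensorProduct.tmul_sub, smul_mul_assoc,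
    TensorProduct.tmul_smul]
  simp only [← Algebra.smul_def, ← TensorProduct.smul_tmul']
  module

theorem opT_commute_opC {i : Fin (n - 1)} {j : Fin n} (hlo : j ≠ lo i) (hhi : j ≠ hi i) :
    Commute (D.opT i) (D.opC j) := by
  refine TensorProduct.ext' fun k a => ?_
  simp only [Module.End.mul_apply, opC_tmul, opT_tmul, map_add, map_mul, map_sub,
    flipVar_diffCoeff_of_ne ξ hlo hhi, flipVar_prodCoeff_of_ne ξ hlo hhi, perm_flipVar,
    s_of_ne hlo hhi, ← mul_assoc, (D.T_commute_C hlo hhi).eq,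
    (D.cliffordPair_commute_C hlo hhi).eq, flipVar_comm j]

theorem opT_mul_opPair (i : Fin (n - 1)) :
    D.opT i * D.opPair i = -(D.opPair i * D.opT i) + ξ • D.opPair i + ξ • 1 :=
  hecke_mul_cliffordPair (D.opT_mul_opC_lo i) (D.opT_mul_opC_hi i) (D.opC_anti (lo_ne_hi i))
    (D.opC_sq _)

end CliffordRelations

section VariableRelations

theorem opT_mul_mulOp (i : Fin (n - 1)) (g : RatFn F n) :
    D.opT i * mulOp A g = mulOp A (perm F (s i) g) * D.opT i
      + mulOp A (diffCoeff ξ i * (g - perm F (s i) g))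
      + mulOp A (prodCoeff ξ i * (flipVar F (lo i) (flipVar F (hi i) g) - perm F (s i) g)) *
        D.opPair i := by
  refine TensorProduct.ext' fun k a => ?_
  simp only [LinearMap.add_apply, Module.End.mul_apply, opPair_tmul, mulOp_tmul, opT_tmul,
    map_add, map_mul (flipVar F _), map_mul (perm F _)]
  have h_diff : diffCoeff ξ i * (g * k - perm F (s i) g * perm F (s i) k) =
      perm F (s i) g * (diffCoeff ξ i * (k - perm F (s i) k)) +
        diffCoeff ξ i * (g - perm F (s i) g) * k := by
    ring
  have h_prod (g' k' : RatFn F n) : prodCoeff ξ i * (g' * k' - perm F (s i) g * perm F (s i) k) =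
      perm F (s i) g * (prodCoeff ξ i * (k' - perm F (s i) k)) +
        prodCoeff ξ i * (g' - perm F (s i) g) * k' := by
    ring
  rw [h_diff, h_prod, TensorProduct.add_tmul, TensorProduct.add_tmul]
  abel

theorem opT_commute_mulOp {i : Fin (n - 1)} {g : RatFn F n} (hs : perm F (s i) g = g)
    (hlo : flipVar F (lo i) g = g) (hhi : flipVar F (hi i) g = g) :
    Commute (D.opT i) (mulOp A g) := by
  rw [commute_iff_eq, opT_mul_mulOp, hs, hhi, hlo]
  simp only [sub_self, mul_zero, map_zero, zero_mul, add_zero]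

theorem opT_commute_var {i : Fin (n - 1)} {j : Fin n} (hlo : j ≠ lo i) (hhi : j ≠ hi i) :
    Commute (D.opT i) (mulOp A (var F j)) :=
  D.opT_commute_mulOp (by rw [perm_var, s_of_ne hlo hhi]) (flipVar_var_of_ne F hlo.symm)
    (flipVar_var_of_ne F hhi.symm)

theorem opT_mul_var_lo (i : Fin (n - 1)) : D.opT i * mulOp A (var F (lo i)) =
    mulOp A (var F (hi i)) * D.opT i - ξ • mulOp A (var F (hi i))
      - ξ • (mulOp A (var F (lo i))⁻¹ * D.opPair i) := by
  rw [opT_mul_mulOp, perm_var, s_lo, flipVar_var_of_ne F (lo_ne_hi i).symm, flipVar_var_self,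
    ← neg_sub (var F (hi i)), mul_neg, diffCoeff_mul_var_sub, ← neg_sub (var F (hi i)), mul_neg,
    prodCoeff_mul_hi_sub, map_neg, mulOp_neg_mul, map_smul, map_smul, smul_mul_assoc,
    ← sub_eq_add_neg, ← sub_eq_add_neg]

theorem opT_mul_var_hi (i : Fin (n - 1)) : D.opT i * mulOp A (var F (hi i)) =
    mulOp A (var F (lo i)) * D.opT i + ξ • mulOp A (var F (hi i))
      - ξ • (mulOp A (var F (hi i))⁻¹ * D.opPair i) := by
  rw [opT_mul_mulOp, perm_var, s_hi, flipVar_var_self, map_inv₀, flipVar_var_of_ne F (lo_ne_hi i),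
    diffCoeff_mul_var_sub, ← neg_sub (var F (lo i)), mul_neg, prodCoeff_mul_lo_sub,
    mulOp_neg_mul, map_smul, map_smul, smul_mul_assoc, ← sub_eq_add_neg]

theorem opT_mul_inv_lo (i : Fin (n - 1)) : D.opT i * mulOp A (var F (lo i))⁻¹ =
    mulOp A (var F (hi i))⁻¹ * D.opT i + ξ • mulOp A (var F (lo i))⁻¹
      + ξ • (mulOp A (var F (hi i))⁻¹ * D.opPair i) := by
  rw [opT_mul_mulOp, map_inv₀ (perm F _), perm_var, s_lo, map_inv₀ (flipVar F _),
    flipVar_var_of_ne F (lo_ne_hi i).symm, map_inv₀ (flipVar F _), flipVar_var_self, inv_inv,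
    diffCoeff_mul_inv_sub, prodCoeff_mul_lo_sub, map_smul, map_smul, smul_mul_assoc]

theorem opT_mul_inv_hi (i : Fin (n - 1)) : D.opT i * mulOp A (var F (hi i))⁻¹ =
    mulOp A (var F (lo i))⁻¹ * D.opT i - ξ • mulOp A (var F (lo i))⁻¹
      + ξ • (mulOp A (var F (lo i))⁻¹ * D.opPair i) := by
  rw [opT_mul_mulOp, map_inv₀ (perm F _), perm_var, s_hi, map_inv₀ (flipVar F _), flipVar_var_self,
    inv_inv, flipVar_var_of_ne F (lo_ne_hi i), ← neg_sub (var F (lo i))⁻¹, mul_neg,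
    diffCoeff_mul_inv_sub, prodCoeff_mul_hi_sub, map_neg, map_smul, smul_mul_assoc,
    ← sub_eq_add_neg]

theorem opT_cross (i : Fin (n - 1)) (hsq : D.opT i * D.opT i = ξ • D.opT i + 1) :
    (D.opT i + ξ • D.opPair i) * mulOp A (var F (lo i)) * D.opT i = mulOp A (var F (hi i)) :=
  heckeStar_mul_mul_eq hsq (D.opT_mul_var_lo i) (D.opPair_mul_var_lo i)

end VariableRelations

section HeckeRelations

theorem opT_sq (i : Fin (n - 1)) : D.opT i * D.opT i = ξ • D.opT i + 1 := by
  refine sub_eq_zero.1 (eq_zero_of_semiconjBy_var AlgEquiv.refl (fun j => ?_) fun a => ?_)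
  · obtain rfl | hlo := eq_or_ne j (lo i)
    · exact quadratic_commute_lo (D.opT_mul_var_lo i) (D.opT_mul_var_hi i) (D.opT_mul_inv_lo i)
        (D.opT_mul_opPair i) (D.opPair_sq i)
    obtain rfl | hhi := eq_or_ne j (hi i)
    · exact quadratic_commute_hi (D.opT_mul_var_lo i) (D.opT_mul_var_hi i) (D.opT_mul_inv_hi i)
        (D.opT_mul_opPair i) (D.opPair_sq i)
    have h := D.opT_commute_var hlo hhi
    exact (h.mul_left h).sub_left ((h.smul_left ξ).add_left (Commute.one_left _))
  · simp only [LinearMap.sub_apply, LinearMap.add_apply, LinearMap.smul_apply,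
      Module.End.mul_apply, Module.End.one_apply, opT_one_tmul, ← mul_assoc, D.T_sq, add_mul,
      smul_mul_assoc, one_mul, TensorProduct.tmul_add, TensorProduct.tmul_smul, sub_self]

theorem opT_commute_permOp {i : Fin (n - 1)} {w : Equiv.Perm (Fin n)} {b : A}
    (hw : w * s i = s i * w) (hlo : w (lo i) = lo i) (hhi : w (hi i) = hi i)
    (hT : Commute (D.T i) b) (hpair : Commute (D.cliffordPair i) b) :
    Commute (D.opT i) (permOp w b) := by
  have hperm (k : RatFn F n) : perm F w (perm F (s i) k) = perm F (s i) (perm F w k) := by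
    rw [← perm_mul, hw, perm_mul]
  refine TensorProduct.ext' fun k a => ?_
  simp only [Module.End.mul_apply, opT_tmul, permOp_tmul, map_add, map_mul, map_sub, hperm,
    perm_diffCoeff ξ hlo hhi, perm_prodCoeff ξ hlo hhi, perm_flipVar, hlo, hhi, ← mul_assoc, hT.eq,
    hpair.eq]

theorem opT_commute_opT {i j : Fin (n - 1)} (h : (i : ℕ) + 1 < (j : ℕ)) :
    Commute (D.opT i) (D.opT j) := by
  have hll : lo j ≠ lo i := by simp only [lo, ne_eq, Fin.mk.injEq]; omega
  have hlh : lo j ≠ hi i := by simp only [lo, hi, ne_eq, Fin.mk.injEq]; omega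
  have hhl : hi j ≠ lo i := by simp only [lo, hi, ne_eq, Fin.mk.injEq]; omega
  have hhh : hi j ≠ hi i := by simp only [hi, ne_eq, Fin.mk.injEq]; omega
  have hlo : s j (lo i) = lo i := s_of_ne hll.symm hhl.symm
  have hhi : s j (hi i) = hi i := s_of_ne hlh.symm hhh.symm
  have hs : s j * s i = s i * s j := by
    rw [s, s, Equiv.mul_swap_eq_swap_mul, ← s, hlo, hhi]
  have hperm {b : A} := D.opT_commute_permOp (b := b) hs hlo hhi
  have hT_pair : Commute (D.T i) (D.cliffordPair j) :=
    (D.T_commute_C hll hlh).mul_right (D.T_commute_C hhl hhh)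
  have hpair_T : Commute (D.cliffordPair i) (D.T j) :=
    ((D.T_commute_C hll.symm hhl.symm).mul_right (D.T_commute_C hlh.symm hhh.symm)).symm
  have hpair : Commute (D.cliffordPair i) (D.cliffordPair j) :=
    (D.cliffordPair_commute_C hll hlh).mul_right (D.cliffordPair_commute_C hhl hhh)
  have hdiff : Commute (D.opT i) (mulOp A (diffCoeff ξ j)) :=
    D.opT_commute_mulOp (perm_diffCoeff ξ (s_of_ne hll hlh) (s_of_ne hhl hhh))
      (flipVar_diffCoeff_of_ne ξ hll.symm hhl.symm) (flipVar_diffCoeff_of_ne ξ hlh.symm hhh.symm)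
  have hprod : Commute (D.opT i) (mulOp A (prodCoeff ξ j)) :=
    D.opT_commute_mulOp (perm_prodCoeff ξ (s_of_ne hll hlh) (s_of_ne hhl hhh))
      (flipVar_prodCoeff_of_ne ξ hll.symm hhl.symm) (flipVar_prodCoeff_of_ne ξ hlh.symm hhh.symm)
  have hopPair : Commute (D.opT i) (D.opPair j) :=
    (D.opT_commute_opC hll hlh).mul_right (D.opT_commute_opC hhl hhh)
  exact ((hperm (D.T_commute_T h) hpair_T).add_right
      (hdiff.mul_right ((Commute.one_right _).sub_right
        (hperm (Commute.one_right _) (Commute.one_right _))))).add_right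
    (hprod.mul_right (hopPair.sub_right (hperm hT_pair hpair)))

theorem opTstar_commute_var {i : Fin (n - 1)} {j : Fin n} (hlo : j ≠ lo i) (hhi : j ≠ hi i) :
    Commute (D.opT i + ξ • D.opPair i) (mulOp A (var F j)) := by
  refine (D.opT_commute_var hlo hhi).add_left (Commute.smul_left ?_ ξ)
  have h := D.opPair_semiconjBy_mulOp i (var F j)
  rwa [flipVar_var_of_ne F hhi.symm, flipVar_var_of_ne F hlo.symm] at h

section Braid

variable {i j : Fin (n - 1)} (h : (j : ℕ) = (i : ℕ) + 1)

include h

theorem rankThree_op :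
    RankThree ξ (D.opT i) (D.opT j) (D.opC (lo i)) (D.opC (hi i)) (D.opC (hi j)) := by
  have hlo : lo j = hi i := Fin.ext h
  have hne : hi j ≠ lo i := by simp only [lo, hi, ne_eq, Fin.mk.injEq]; omega
  have hne' : hi j ≠ hi i := hlo ▸ (lo_ne_hi j).symm
  exact
    { U_sq := D.opT_sq i
      V_sq := D.opT_sq j
      U_mul_C₁ := D.opT_mul_opC_lo i
      U_mul_C₃ := D.opT_commute_opC hne hne'
      V_mul_C₁ := D.opT_commute_opC (hlo ▸ lo_ne_hi i) hne.symm
      V_mul_C₂ := hlo ▸ D.opT_mul_opC_lo j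
      C₁_sq := D.opC_sq _
      C₂_sq := D.opC_sq _
      C₃_sq := D.opC_sq _
      C₂_mul_C₁ := D.opC_anti (lo_ne_hi i).symm
      C₃_mul_C₁ := D.opC_anti hne
      C₃_mul_C₂ := D.opC_anti hne' }

theorem opT_braid : D.opT i * D.opT j * D.opT i = D.opT j * D.opT i * D.opT j := by
  have hlo : lo j = hi i := Fin.ext h
  have hne : hi j ≠ lo i := by simp only [lo, hi, ne_eq, Fin.mk.injEq]; omega
  have hne' : hi j ≠ hi i := hlo ▸ (lo_ne_hi j).symm
  have hs₁ : (s i * s j * s i) (lo i) = hi j := by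
    rw [Equiv.Perm.mul_apply, Equiv.Perm.mul_apply, s_lo, ← hlo, s_lo, s_of_ne hne hne']
  have hs₂ : (s i * s j * s i) (hi i) = hi i := by
    rw [Equiv.Perm.mul_apply, Equiv.Perm.mul_apply, s_hi, s_of_ne (hlo ▸ lo_ne_hi i) hne.symm, s_lo]
  have hs₃ : (s i * s j * s i) (hi j) = lo i := by
    rw [Equiv.Perm.mul_apply, Equiv.Perm.mul_apply, s_of_ne hne hne', s_hi, hlo, s_hi]
  have hX₂ := D.opT_cross i (D.opT_sq i)
  have hX₃ := D.opT_cross j (D.opT_sq j)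
  have hX₁V := D.opTstar_commute_var (hlo ▸ lo_ne_hi i) hne.symm
  have hX₃U := D.opTstar_commute_var hne hne'
  have h₃ := D.rankThree_op h
  rw [opPair, hlo] at hX₃ hX₁V
  refine sub_eq_zero.1 (eq_zero_of_semiconjBy_var (perm F (s i * s j * s i)) (fun l => ?_)
    fun a => ?_)
  · rw [perm_var]
    obtain rfl | hl₁ := eq_or_ne l (lo i)
    · rw [hs₁]
      exact h₃.braid_mul_X₁ hX₂ hX₃ hX₁V hX₃U
    obtain rfl | hl₂ := eq_or_ne l (hi i)
    · rw [hs₂]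
      exact h₃.braid_mul_X₂ hX₂ hX₃ hX₁V hX₃U
    obtain rfl | hl₃ := eq_or_ne l (hi j)
    · rw [hs₃]
      exact h₃.braid_mul_X₃ hX₂ hX₃ hX₁V hX₃U
    have hU := D.opT_commute_var hl₁ hl₂
    have hV := D.opT_commute_var (hlo ▸ hl₂) hl₃
    rw [Equiv.Perm.mul_apply, Equiv.Perm.mul_apply, s_of_ne hl₁ hl₂, s_of_ne (hlo ▸ hl₂) hl₃,
      s_of_ne hl₁ hl₂]
    exact ((hU.mul_left hV).mul_left hU).sub_left ((hV.mul_left hU).mul_left hV)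
  · simp only [LinearMap.sub_apply, Module.End.mul_apply, opT_one_tmul, ← mul_assoc, D.T_braid h,
      sub_self]

end Braid

end HeckeRelations

/-- The action of the affine Hecke–Clifford relations on `A`-valued rational functions. -/
noncomputable def operatorFamily :
    AffineHeckeCliffordFamily F ξ n (Module.End F (RatFn F n ⊗[F] A)) where
  C := D.opC
  T := D.opT
  C_sq := D.opC_sq
  C_anti := D.opC_anti
  T_sq := D.opT_sq
  T_braid := D.opT_braid
  T_commute_T := D.opT_commute_opT
  T_mul_C_lo := D.opT_mul_opC_lo
  T_commute_C := D.opT_commute_opC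
  X i := Units.map (MonoidHomClass.toMonoidHom (mulOp A)) (.mk0 (var F i) (var_ne_zero F i))
  X_commute i j := (Commute.all _ _).map _
  C_mul_X i := by
    simpa [flipVar_var_self] using (D.opC_semiconjBy_mulOp i (var F i)).eq
  C_commute_X {i j} h := by
    simpa [flipVar_var_of_ne F h, commute_iff_eq] using (D.opC_semiconjBy_mulOp i (var F j)).eq
  T_commute_X := D.opT_commute_var
  T_cross i := D.opT_cross i (D.opT_sq i)

end HeckeCliffordFamily

end Operators

section Triangularity

open Module

section Triangular

variable {R M ι κ O : Type*} [Ring R] [AddCommGroup M] [Module R M] [Preorder O]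
  (b : Basis κ R M) (rank : κ → O) {L : ι → κ} {w : ι → M} {u : ι → Rˣ}

theorem linearIndependent_of_triangular (hL : Function.Injective L)
    (hw : ∀ p, w p - (u p : R) • b (L p) ∈
      Submodule.span R (b '' {β | rank β < rank (L p)})) :
    LinearIndependent R w := by
  refine linearIndependent_iff.2 fun c hc => ?_
  by_contra hne
  obtain ⟨p₀, hp₀, hmax⟩ := Finset.exists_maximalFor (fun p => rank (L p))
    c.support (Finsupp.support_nonempty_iff.2 hne)
  have hcoord : ∀ p ∈ c.support, p ≠ p₀ → b.coord (L p₀) (w p) = 0 := fun p hp hpp => by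
    have hrest : b.coord (L p₀) (w p - (u p : R) • b (L p)) = 0 := by
      by_contra h
      have hlt := b.mem_span_image.1 (hw p) (Finsupp.mem_support_iff.2 h)
      exact hlt.not_ge (hmax hp hlt.le)
    simpa [hL.ne hpp] using hrest
  have hcoord₀ : b.coord (L p₀) (w p₀) = u p₀ := by
    have hrest : b.coord (L p₀) (w p₀ - (u p₀ : R) • b (L p₀)) = 0 := by
      by_contra h
      exact lt_irrefl _ (b.mem_span_image.1 (hw p₀) (Finsupp.mem_support_iff.2 h))
    simpa [sub_eq_zero] using hrest
  have hsum : b.coord (L p₀) (Finsupp.linearCombination R w c) = c p₀ * u p₀ := by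
    rw [Finsupp.linearCombination_apply, Finsupp.sum, map_sum, Finset.sum_eq_single_of_mem p₀ hp₀]
    · rw [map_smul, hcoord₀, smul_eq_mul]
    · intro p hp hpp
      rw [map_smul, hcoord p hp hpp, smul_zero]
  rw [hc, map_zero] at hsum
  exact Finsupp.mem_support_iff.1 hp₀ ((u p₀).mul_left_eq_zero.1 hsum.symm)

theorem top_le_span_of_triangular [WellFoundedLT O] (hL : Function.Surjective L)
    (hw : ∀ p, w p - (u p : R) • b (L p) ∈
      Submodule.span R (b '' {β | rank β < rank (L p)})) :
    ⊤ ≤ Submodule.span R (Set.range w) := by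
  have hb : ∀ β, b β ∈ Submodule.span R (Set.range w) := by
    intro β
    induction hβ : rank β using WellFoundedLT.induction generalizing β with
    | ind o ih =>
      obtain ⟨p, rfl⟩ := hL β
      have hlower : Submodule.span R (b '' {β | rank β < rank (L p)}) ≤
          Submodule.span R (Set.range w) :=
        Submodule.span_le.2 (Set.image_subset_iff.2 fun γ hγ => ih _ (hβ ▸ hγ) γ rfl)
      refine (Submodule.smul_mem_iff_of_isUnit _ (u p).isUnit).1 ?_
      rw [← sub_sub_cancel (w p) ((u p : R) • b (L p))]
      exact sub_mem (Submodule.subset_span ⟨p, rfl⟩) (hlower (hw p))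
  rw [← b.span_eq]
  exact Submodule.span_le.2 (Set.range_subset_iff.2 hb)

end Triangular

theorem eq_zero_of_sum_tmul_eq_zero {K V W ι : Type*} [Field K] [AddCommGroup V] [Module K V]
    [AddCommGroup W] [Module K W] {v : ι → V} (hv : LinearIndependent K v) {t : Finset ι}
    {a : ι → W} (h : ∑ i ∈ t, v i ⊗ₜ[K] a i = 0) {i : ι} (hi : i ∈ t) : a i = 0 := by
  classical
  obtain ⟨g, hg⟩ := LinearMap.exists_leftInverse_of_injective _ (LinearMap.ker_eq_bot.2 hv)
  have hgv : ∀ j, g (v j) = Finsupp.single j 1 := fun j => by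
    simpa using LinearMap.congr_fun hg (Finsupp.single j 1)
  have hcoeff := congrArg (TensorProduct.lid K W ∘
    LinearMap.rTensor W (Finsupp.lapply i ∘ₗ g)) h
  simpa [hgv, Finsupp.single_apply, ite_smul, hi] using hcoeff

theorem existsUnique_eq_finsupp_sum_mul {F A ι : Type*} [CommRing F] [Ring A] [Algebra F A]
    {B : Subalgebra F A} (b : Basis ι B.op A) (x : A) :
    ∃! c : ι →₀ B, x = c.sum fun p a => b p * (a : A) := by
  let e : (ι →₀ B) ≃+ (ι →₀ B.op) := Finsupp.mapRange.addEquiv B.linearEquivOp.toAddEquiv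
  have he : ∀ c, (c.sum fun p a => b p * (a : A)) = b.repr.symm (e c) := fun c => by
    rw [b.repr_symm_apply, Finsupp.linearCombination_apply]
    exact (Finsupp.sum_mapRange_index (g := c) (f := B.linearEquivOp) (hf := map_zero _)
      (h := fun p (a : B.op) => a • b p) fun p => zero_smul _ (b p)).symm
  refine ⟨e.symm (b.repr x), ?_, fun c hc => ?_⟩
  · beta_reduce
    rw [he, e.apply_symm_apply, b.repr.symm_apply_apply]
  · rw [hc, he, b.repr.apply_symm_apply, e.symm_apply_apply]

theorem existsUnique_eq_finsupp_sum_mul_of_triangular {F A ι κ O : Type*} [CommRing F] [Ring A]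
    [Algebra F A] {B : Subalgebra F A} [Preorder O] [WellFoundedLT O] (b : Basis κ B.op A)
    (rank : κ → O) {L : ι → κ} (hL : Function.Bijective L) {w : ι → A} {u : ι → (B.op)ˣ}
    (hw : ∀ p, w p - (u p : B.op) • b (L p) ∈
      Submodule.span B.op (b '' {β | rank β < rank (L p)})) (x : A) :
    ∃! c : ι →₀ B, x = c.sum fun p a => w p * (a : A) := by
  have hbasis := existsUnique_eq_finsupp_sum_mul
    (.mk (linearIndependent_of_triangular b rank hL.injective hw)
      (top_le_span_of_triangular b rank hL.surjective hw)) x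
  rwa [Basis.coe_mk] at hbasis

end Triangularity

section Monomials

theorem pi_int_induction {ι : Type*} [Finite ι] [DecidableEq ι] {P : (ι → ℤ) → Prop} (zero : P 0)
    (add_single : ∀ i α, P α → P (Pi.single i 1 + α))
    (sub_single : ∀ i α, P α → P (Pi.single i (-1) + α)) (α : ι → ℤ) : P α := by
  cases nonempty_fintype ι
  have hsingle : ∀ i (a : ℤ) β, P β → P (Pi.single i a + β) := by
    intro i a β hβ
    induction a using Int.induction_on with
    | zero => rwa [Pi.single_zero, zero_add]
    | succ m ih =>
      rw [add_comm (m : ℤ), Pi.single_add, add_assoc]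
      exact add_single i _ ih
    | pred m ih =>
      rw [sub_eq_neg_add, Pi.single_add, add_assoc]
      exact sub_single i _ ih
  have hsum : ∀ t : Finset ι, P (∑ i ∈ t, Pi.single i (α i)) := by
    intro t
    induction t using Finset.induction_on with
    | empty => simpa using zero
    | insert i t hi ih =>
      rw [Finset.sum_insert hi]
      exact hsingle i _ _ ih
  simpa only [Finset.univ_sum_single] using hsum Finset.univ

theorem list_prod_semiconjBy {M ι : Type*} [Monoid M] {a : M} {x y : ι → M}
    (h : ∀ i, SemiconjBy a (x i) (y i)) (l : List ι) :
    SemiconjBy a (l.map x).prod (l.map y).prod := by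
  induction l with
  | nil => simp
  | cons i l ih => simpa using (h i).mul_right ih

theorem list_prod_map_mul_of_commute {M ι : Type*} [Monoid M] {x y : ι → M}
    (h : ∀ i j, Commute (y i) (x j)) (l : List ι) :
    (l.map fun i => x i * y i).prod = (l.map x).prod * (l.map y).prod := by
  induction l with
  | nil => simp
  | cons i l ih =>
    have hi : Commute (y i) (l.map x).prod := list_prod_semiconjBy (h i) l
    simp only [List.map_cons, List.prod_cons, ih, mul_assoc]
    rw [hi.left_comm]

variable {F} {ξ : F} {n : ℕ} {A : Type*} [Ring A] [Algebra F A]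

namespace AffineHeckeCliffordFamily

variable (D : AffineHeckeCliffordFamily F ξ n A)

/-- The monomial `X^α`. -/
def mon (α : Fin n → ℤ) : A := ((List.finRange n).map fun i => ((D.X i ^ α i : Aˣ) : A)).prod

theorem mon_zero : D.mon 0 = 1 := by
  simp [mon]

theorem mon_add (α β : Fin n → ℤ) : D.mon (α + β) = D.mon α * D.mon β := by
  rw [mon, mon, mon, ← list_prod_map_mul_of_commute]
  · simp only [Pi.add_apply, zpow_add, Units.val_mul]
  · exact fun i j => congrArg Units.val (((D.X_commute i j).zpow_zpow _ _).eq)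

theorem mon_commute_mon (α β : Fin n → ℤ) : Commute (D.mon α) (D.mon β) := by
  rw [commute_iff_eq, ← mon_add, add_comm, mon_add]

theorem mon_single (i : Fin n) (a : ℤ) : D.mon (Pi.single i a) = ↑(D.X i ^ a) := by
  rw [mon, List.prod_map_eq_pow_single i,
    List.count_eq_one_of_mem (List.nodup_finRange n) (List.mem_finRange i), pow_one,
    Pi.single_eq_same]
  intro j hj _
  rw [Pi.single_eq_of_ne hj, zpow_zero, Units.val_one]

theorem mon_single_one (i : Fin n) : D.mon (Pi.single i 1) = D.X i := by
  rw [mon_single, zpow_one]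

theorem mon_single_neg_one (i : Fin n) : D.mon (Pi.single i (-1)) = ↑(D.X i)⁻¹ := by
  rw [mon_single, zpow_neg_one]

theorem mon_single_natCast (i : Fin n) (e : ℕ) :
    D.mon (Pi.single i (e : ℤ)) = (D.X i : A) ^ e := by
  rw [mon_single, zpow_natCast, Units.val_pow_eq_pow_val]

theorem C_semiconjBy_mon (i : Fin n) (α : Fin n → ℤ) :
    SemiconjBy (D.C i) (D.mon α) (D.mon (Function.update α i (-α i))) := by
  refine list_prod_semiconjBy (fun j => ?_) _
  obtain rfl | hji := eq_or_ne j i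
  · have h : SemiconjBy (D.C j) (D.X j : A) ((D.X j)⁻¹ : Aˣ) := D.C_mul_X j
    simpa only [Function.update_self, inv_zpow'] using h.units_zpow_right (α j)
  · rw [Function.update_of_ne hji]
    exact (D.C_commute_X hji.symm).units_zpow_right (α j)

theorem C_commute_mon {i : Fin n} {α : Fin n → ℤ} (hα : α i = 0) :
    Commute (D.C i) (D.mon α) := by
  have h := D.C_semiconjBy_mon i α
  rwa [hα, neg_zero, ← hα, Function.update_eq_self] at h

theorem T_commute_mon {i : Fin (n - 1)} {α : Fin n → ℤ} (hlo : α (lo i) = 0)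
    (hhi : α (hi i) = 0) : Commute (D.T i) (D.mon α) := by
  refine list_prod_semiconjBy (fun j => ?_) _
  obtain rfl | hjlo := eq_or_ne j (lo i)
  · rw [hlo, zpow_zero]
    exact Commute.one_right _
  obtain rfl | hjhi := eq_or_ne j (hi i)
  · rw [hhi, zpow_zero]
    exact Commute.one_right _
  · exact (D.T_commute_X hjlo hjhi).units_zpow_right (α j)

theorem Tstar_commute_mon {i : Fin (n - 1)} {α : Fin n → ℤ} (hlo : α (lo i) = 0)
    (hhi : α (hi i) = 0) : Commute (D.Tstar i) (D.mon α) :=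
  (D.T_commute_mon hlo hhi).add_left
    (((D.C_commute_mon hlo).mul_left (D.C_commute_mon hhi)).smul_left ξ)

theorem cliffordPair_mul_mon_single_lo (i : Fin (n - 1)) (a : ℤ) :
    D.cliffordPair i * D.mon (Pi.single (lo i) a) =
      D.mon (Pi.single (lo i) (-a)) * D.cliffordPair i := by
  have hhi := D.C_commute_mon (i := hi i) (Pi.single_eq_of_ne (lo_ne_hi i).symm a)
  have hlo := D.C_semiconjBy_mon (lo i) (Pi.single (lo i) a)
  rw [Pi.single_eq_same, Pi.single, Function.update_idem] at hlo
  exact hlo.mul_left hhi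

section Span

/-- The right module over the finite subalgebra spanned by the monomials with exponents in `S`. -/
def monSpan (S : Set (Fin n → ℤ)) : Submodule D.finiteSubalgebra.op A :=
  Submodule.span _ (D.mon '' S)

variable {D} {S S' : Set (Fin n → ℤ)} {x y h : A}

theorem mon_mem_monSpan {β : Fin n → ℤ} (hβ : β ∈ S) : D.mon β ∈ D.monSpan S :=
  Submodule.subset_span ⟨β, hβ, rfl⟩

theorem monSpan_mono (hS : S ⊆ S') : D.monSpan S ≤ D.monSpan S' :=
  Submodule.span_mono (Set.image_mono hS)

theorem mul_mem_monSpan (hx : x ∈ D.monSpan S) (hh : h ∈ D.finiteSubalgebra) :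
    x * h ∈ D.monSpan S :=
  (D.monSpan S).smul_mem (⟨.op h, hh⟩ : D.finiteSubalgebra.op) hx

theorem smul_mem_monSpan (c : F) (hx : x ∈ D.monSpan S) : c • x ∈ D.monSpan S :=
  Submodule.smul_of_tower_mem _ c hx

theorem mul_mem_monSpan_of_mon (hy : ∀ β ∈ S, y * D.mon β ∈ D.monSpan S')
    (hx : x ∈ D.monSpan S) : y * x ∈ D.monSpan S' := by
  have hle : D.monSpan S ≤ (D.monSpan S').comap (LinearMap.mulLeft D.finiteSubalgebra.op y) :=
    Submodule.span_le.2 (Set.image_subset_iff.2 hy)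
  exact hle hx

theorem mon_mul_mem_monSpan {α : Fin n → ℤ} (hS : ∀ β ∈ S, α + β ∈ S') (hx : x ∈ D.monSpan S) :
    D.mon α * x ∈ D.monSpan S' :=
  mul_mem_monSpan_of_mon (fun β hβ => by rw [← mon_add]; exact mon_mem_monSpan (hS β hβ)) hx

theorem C_mul_mem_monSpan {i : Fin n} (hS : ∀ β ∈ S, Function.update β i (-β i) ∈ S')
    (hx : x ∈ D.monSpan S) : D.C i * x ∈ D.monSpan S' :=
  mul_mem_monSpan_of_mon (fun β hβ => by
    rw [(D.C_semiconjBy_mon i β).eq]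
    exact mul_mem_monSpan (mon_mem_monSpan (hS β hβ)) (D.C_mem i)) hx

/-- The exponents that agree with `β` away from `i` and `i + 1`. -/
def agreeOff (i : Fin (n - 1)) (β : Fin n → ℤ) : Set (Fin n → ℤ) :=
  {γ | ∀ j, j ≠ lo i → j ≠ hi i → γ j = β j}

theorem agreeOff_single_add {i : Fin (n - 1)} {l : Fin n} (hl : l = lo i ∨ l = hi i) (a : ℤ)
    (β : Fin n → ℤ) : agreeOff i (Pi.single l a + β) = agreeOff i β := by
  refine Set.ext fun γ => forall_congr' fun j => forall₂_congr fun hlo hhi => ?_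
  have hjl : j ≠ l := by rintro rfl; exact hl.elim hlo hhi
  rw [Pi.add_apply, Pi.single_eq_of_ne hjl, zero_add]

theorem single_add_mem_agreeOff {i : Fin (n - 1)} {β γ : Fin n → ℤ} (l : Fin n) (a : ℤ)
    (hγ : γ ∈ agreeOff i β) : Pi.single l a + γ ∈ agreeOff i (Pi.single l a + β) :=
  fun j hlo hhi => by rw [Pi.add_apply, Pi.add_apply, hγ j hlo hhi]

theorem cliffordPair_mul_mem_agreeOff {i : Fin (n - 1)} {β : Fin n → ℤ}
    (hx : x ∈ D.monSpan (agreeOff i β)) : D.cliffordPair i * x ∈ D.monSpan (agreeOff i β) := by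
  rw [HeckeCliffordFamily.cliffordPair, mul_assoc]
  refine C_mul_mem_monSpan (S := agreeOff i β) (fun γ hγ j hlo hhi => ?_)
    (C_mul_mem_monSpan (fun γ hγ j hlo hhi => ?_) hx)
  · rw [Function.update_of_ne hlo, hγ j hlo hhi]
  · rw [Function.update_of_ne hhi, hγ j hlo hhi]

theorem X_mul_mem_agreeOff {i : Fin (n - 1)} (l : Fin n) {β : Fin n → ℤ}
    (hx : x ∈ D.monSpan (agreeOff i β)) :
    D.X l * x ∈ D.monSpan (agreeOff i (Pi.single l 1 + β)) := by
  rw [← mon_single_one]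
  exact mon_mul_mem_monSpan (fun γ => single_add_mem_agreeOff l 1) hx

theorem X_inv_mul_mem_agreeOff {i : Fin (n - 1)} (l : Fin n) {β : Fin n → ℤ}
    (hx : x ∈ D.monSpan (agreeOff i β)) :
    ↑(D.X l)⁻¹ * x ∈ D.monSpan (agreeOff i (Pi.single l (-1) + β)) := by
  rw [← mon_single_neg_one]
  exact mon_mul_mem_monSpan (fun γ => single_add_mem_agreeOff l (-1)) hx

theorem T_mul_X_mul_mem_agreeOff {i : Fin (n - 1)} (l : Fin n) {β : Fin n → ℤ}
    (hx : x ∈ D.monSpan (agreeOff i β)) (hTx : D.T i * x ∈ D.monSpan (agreeOff i β)) :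
    D.T i * (D.X l * x) ∈ D.monSpan (agreeOff i (Pi.single l 1 + β)) := by
  have hX {l y} (hl : l = lo i ∨ l = hi i) (hy : y ∈ D.monSpan (agreeOff i β)) :
      D.X l * y ∈ D.monSpan (agreeOff i β) := by
    simpa only [agreeOff_single_add hl] using X_mul_mem_agreeOff l hy
  have hXinv {l y} (hl : l = lo i ∨ l = hi i) (hy : y ∈ D.monSpan (agreeOff i β)) :
      ↑(D.X l)⁻¹ * y ∈ D.monSpan (agreeOff i β) := by
    simpa only [agreeOff_single_add hl] using X_inv_mul_mem_agreeOff l hy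
  have hpair := cliffordPair_mul_mem_agreeOff hx
  rw [← mul_assoc]
  obtain rfl | hlo := eq_or_ne l (lo i)
  · rw [agreeOff_single_add (.inl rfl), T_mul_X_lo, sub_mul, sub_mul, smul_mul_assoc,
      smul_mul_assoc, mul_assoc, mul_assoc]
    exact sub_mem (sub_mem (hX (.inr rfl) hTx) (smul_mem_monSpan _ (hX (.inr rfl) hx)))
      (smul_mem_monSpan _ (hXinv (.inl rfl) hpair))
  obtain rfl | hhi := eq_or_ne l (hi i)
  · rw [agreeOff_single_add (.inr rfl), T_mul_X_hi, sub_mul, add_mul, smul_mul_assoc,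
      smul_mul_assoc, mul_assoc, mul_assoc]
    exact sub_mem (add_mem (hX (.inl rfl) hTx) (smul_mem_monSpan _ (hX (.inr rfl) hx)))
      (smul_mem_monSpan _ (hXinv (.inr rfl) hpair))
  · rw [(D.T_commute_X hlo hhi).eq, mul_assoc]
    exact X_mul_mem_agreeOff l hTx

theorem T_mul_X_inv_mul_mem_agreeOff {i : Fin (n - 1)} (l : Fin n) {β : Fin n → ℤ}
    (hx : x ∈ D.monSpan (agreeOff i β)) (hTx : D.T i * x ∈ D.monSpan (agreeOff i β)) :
    D.T i * (↑(D.X l)⁻¹ * x) ∈ D.monSpan (agreeOff i (Pi.single l (-1) + β)) := by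
  have hXinv {l y} (hl : l = lo i ∨ l = hi i) (hy : y ∈ D.monSpan (agreeOff i β)) :
      ↑(D.X l)⁻¹ * y ∈ D.monSpan (agreeOff i β) := by
    simpa only [agreeOff_single_add hl] using X_inv_mul_mem_agreeOff l hy
  have hpair := cliffordPair_mul_mem_agreeOff hx
  rw [← mul_assoc]
  obtain rfl | hlo := eq_or_ne l (lo i)
  · rw [agreeOff_single_add (.inl rfl), T_mul_X_inv_lo, add_mul, add_mul, smul_mul_assoc,
      smul_mul_assoc, mul_assoc, mul_assoc]
    exact add_mem (add_mem (hXinv (.inr rfl) hTx) (smul_mem_monSpan _ (hXinv (.inl rfl) hx)))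
      (smul_mem_monSpan _ (hXinv (.inr rfl) hpair))
  obtain rfl | hhi := eq_or_ne l (hi i)
  · rw [agreeOff_single_add (.inr rfl), T_mul_X_inv_hi, HeckeCliffordFamily.Tstar, mul_assoc,
      sub_mul, add_mul, smul_mul_assoc, smul_mul_assoc, one_mul]
    exact hXinv (.inl rfl) (sub_mem (add_mem hTx (smul_mem_monSpan _ hpair))
      (smul_mem_monSpan _ hx))
  · rw [(D.T_commute_X hlo hhi).units_inv_right.eq, mul_assoc]
    exact X_inv_mul_mem_agreeOff l hTx

theorem T_mul_mon_mem_agreeOff (i : Fin (n - 1)) (β : Fin n → ℤ) :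
    D.T i * D.mon β ∈ D.monSpan (agreeOff i β) := by
  have hmon β : D.mon β ∈ D.monSpan (agreeOff i β) := mon_mem_monSpan fun _ _ _ => rfl
  induction β using pi_int_induction with
  | zero =>
    rw [(D.T_commute_mon rfl rfl).eq]
    exact mul_mem_monSpan (hmon 0) (D.T_mem i)
  | add_single l β ih =>
    rw [mon_add, mon_single_one]
    exact T_mul_X_mul_mem_agreeOff l (hmon β) ih
  | sub_single l β ih =>
    rw [mon_add, mon_single_neg_one]
    exact T_mul_X_inv_mul_mem_agreeOff l (hmon β) ih

theorem T_mul_mem_monSpan {i : Fin (n - 1)} (hS : ∀ β ∈ S, agreeOff i β ⊆ S')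
    (hx : x ∈ D.monSpan S) : D.T i * x ∈ D.monSpan S' :=
  mul_mem_monSpan_of_mon (fun β hβ => monSpan_mono (hS β hβ) (T_mul_mon_mem_agreeOff i β)) hx

end Span

end AffineHeckeCliffordFamily

end Monomials

section MonomialBasis

open scoped TensorProduct

variable {F} (q : F) (n : ℕ)

theorem mkAlgHom_mul_mem_monSpan (w : FA F n) {x : H F q n}
    (hx : x ∈ (standardFamily q n).monSpan Set.univ) :
    RingQuot.mkAlgHom F (Rel F q n) w * x ∈ (standardFamily q n).monSpan Set.univ := by
  induction w using FreeAlgebra.induction generalizing x with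
  | grade0 c =>
    rw [AlgHom.commutes, ← Algebra.smul_def]
    exact AffineHeckeCliffordFamily.smul_mem_monSpan c hx
  | grade1 g =>
    cases g with
    | X i =>
      change (standardFamily q n).X i * x ∈ _
      rw [← AffineHeckeCliffordFamily.mon_single_one]
      exact AffineHeckeCliffordFamily.mon_mul_mem_monSpan (fun _ _ => trivial) hx
    | Xinv i =>
      change ↑((standardFamily q n).X i)⁻¹ * x ∈ _
      rw [← AffineHeckeCliffordFamily.mon_single_neg_one]
      exact AffineHeckeCliffordFamily.mon_mul_mem_monSpan (fun _ _ => trivial) hx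
    | C i => exact AffineHeckeCliffordFamily.C_mul_mem_monSpan (fun _ _ => trivial) hx
    | T i => exact AffineHeckeCliffordFamily.T_mul_mem_monSpan (fun _ _ _ _ => trivial) hx
  | mul v w hv hw =>
    rw [map_mul, mul_assoc]
    exact hv (hw hx)
  | add v w hv hw =>
    rw [map_add, add_mul]
    exact add_mem (hv hx) (hw hx)

theorem monSpan_univ : (standardFamily q n).monSpan Set.univ = ⊤ := by
  refine eq_top_iff.2 fun x _ => ?_
  obtain ⟨w, rfl⟩ := RingQuot.mkAlgHom_surjective F (Rel F q n) x
  have h := mkAlgHom_mul_mem_monSpan q n w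
    (AffineHeckeCliffordFamily.mon_mem_monSpan (Set.mem_univ 0))
  rwa [AffineHeckeCliffordFamily.mon_zero, mul_one] at h

variable {q n}

/-- The action of `H_n` on rational functions with values in `H_n`. -/
noncomputable def rationalRep : H F q n →ₐ[F] Module.End F (RatFn F n ⊗[F] H F q n) :=
  (standardFamily q n).operatorFamily.lift

theorem rationalRep_one_tmul {h : H F q n} (hh : h ∈ (standardFamily q n).finiteSubalgebra)
    (a : H F q n) : rationalRep h (1 ⊗ₜ a) = 1 ⊗ₜ (h * a) := by
  induction hh using Algebra.adjoin_induction generalizing a with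
  | mem x hx =>
    obtain ⟨i, rfl⟩ | ⟨i, rfl⟩ := hx
    · rw [rationalRep, AffineHeckeCliffordFamily.lift_C]
      exact HeckeCliffordFamily.opC_one_tmul _ i a
    · rw [rationalRep, AffineHeckeCliffordFamily.lift_T]
      exact HeckeCliffordFamily.opT_one_tmul _ i a
  | algebraMap c =>
    rw [AlgHom.commutes, Module.algebraMap_end_apply, ← Algebra.smul_def, TensorProduct.tmul_smul]
  | add x y _ _ hx hy => rw [map_add, LinearMap.add_apply, hx, hy, add_mul, TensorProduct.tmul_add]
  | mul x y _ _ hx hy => rw [map_mul, Module.End.mul_apply, hy, hx, mul_assoc]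

theorem rationalRep_mon (α : Fin n → ℤ) :
    rationalRep ((standardFamily q n).mon α) = mulOp (H F q n) (RatFn.monomial F α) := by
  have hX (i : Fin n) : Units.map (rationalRep (q := q)).toRingHom.toMonoidHom
      ((standardFamily q n).X i) = (standardFamily q n).operatorFamily.X i :=
    Units.ext (AffineHeckeCliffordFamily.lift_X _ i)
  induction α using pi_int_induction with
  | zero => rw [AffineHeckeCliffordFamily.mon_zero, map_one, RatFn.monomial_zero, map_one]
  | add_single i α ih =>
    rw [AffineHeckeCliffordFamily.mon_add, map_mul, ih, AffineHeckeCliffordFamily.mon_single_one,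
      RatFn.monomial_add, map_mul]
    exact congrArg (· * _) (congrArg Units.val (hX i))
  | sub_single i α ih =>
    rw [AffineHeckeCliffordFamily.mon_add, map_mul, ih,
      AffineHeckeCliffordFamily.mon_single_neg_one, RatFn.monomial_add, map_mul, Pi.single_neg,
      RatFn.monomial_neg]
    refine congrArg (· * _) ?_
    exact congrArg Units.val (congrArg (·⁻¹) (hX i))

theorem linearIndependent_mon :
    LinearIndependent (standardFamily q n).finiteSubalgebra.op (standardFamily q n).mon := by
  refine (linearIndependent_iff' (R := (standardFamily q n).finiteSubalgebra.op)
    (M := H F q n)).2 fun t g hg β hβ => ?_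
  have hterm (γ : Fin n → ℤ) : rationalRep (g γ • (standardFamily q n).mon γ) (1 ⊗ₜ 1) =
      RatFn.monomial F γ ⊗ₜ (g γ : (H F q n)ᵐᵒᵖ).unop := by
    change rationalRep ((standardFamily q n).mon γ * (g γ : (H F q n)ᵐᵒᵖ).unop) (1 ⊗ₜ 1) = _
    rw [map_mul, Module.End.mul_apply, rationalRep_one_tmul (g γ).2, rationalRep_mon, mulOp_tmul,
      mul_one, mul_one]
  have hsum : ∑ γ ∈ t, RatFn.monomial F γ ⊗ₜ[F] (g γ : (H F q n)ᵐᵒᵖ).unop = 0 := by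
    simp only [← hterm, ← LinearMap.sum_apply, ← map_sum, hg, map_zero, LinearMap.zero_apply]
  exact Subtype.ext (MulOpposite.unop_injective
    (eq_zero_of_sum_tmul_eq_zero (RatFn.linearIndependent_monomial F) hsum hβ))

variable (q n) in
/-- The basis of `H_n`, as a right module over its finite subalgebra, given by the monomials. -/
noncomputable def monBasis :
    Module.Basis (Fin n → ℤ) (standardFamily q n).finiteSubalgebra.op (H F q n) :=
  .mk linearIndependent_mon <| by
    rw [← monSpan_univ, AffineHeckeCliffordFamily.monSpan, Set.image_univ]

theorem coe_monBasis : ⇑(monBasis q n) = (standardFamily q n).mon := by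
  simp only [monBasis, Module.Basis.coe_mk]

end MonomialBasis

section Sequence

variable {F} {ξ : F} {n : ℕ}

/-- The exponents supported on the first `k` coordinates. -/
def initialExponents (n k : ℕ) : AddSubgroup (Fin n → ℤ) where
  carrier := {β | ∀ j : Fin n, k ≤ j → β j = 0}
  add_mem' hβ hγ j hj := by rw [Pi.add_apply, hβ j hj, hγ j hj, add_zero]
  zero_mem' _ _ := rfl
  neg_mem' hβ j hj := by rw [Pi.neg_apply, hβ j hj, neg_zero]

theorem initialExponents_mono {k m : ℕ} (h : k ≤ m) :
    initialExponents n k ≤ initialExponents n m :=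
  fun _ hβ j hj => hβ j (h.trans hj)

theorem single_mem_initialExponents {i : Fin n} {k : ℕ} (hi : (i : ℕ) < k) (a : ℤ) :
    (Pi.single i a : Fin n → ℤ) ∈ initialExponents n k :=
  fun _ hj => Pi.single_eq_of_ne (Fin.ne_of_gt (hi.trans_le hj)) _

theorem sub_single_mem_initialExponents {k : Fin n} {β : Fin n → ℤ}
    (hβ : β ∈ initialExponents n (k + 1)) : β - Pi.single k (β k) ∈ initialExponents n k := by
  intro j hj
  obtain rfl | hjk := eq_or_ne j k
  · rw [Pi.sub_apply, Pi.single_eq_same, sub_self]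
  · rw [Pi.sub_apply, Pi.single_eq_of_ne hjk, sub_zero]
    exact hβ j (lt_of_le_of_ne hj (Fin.val_ne_of_ne hjk.symm))

/-- The exponents of the terms of `f_k` that are of intermediate degree in `X_k`. -/
def middleExponents (d : ℕ) (k : Fin n) : Set (Fin n → ℤ) :=
  {β | 0 < β k ∧ β k < d ∧ β ∈ initialExponents n (k + 1)}

theorem single_add_mem_middleExponents {d : ℕ} {k : Fin n} {b : ℤ} (hb : 0 < b) (hbd : b < d)
    {γ : Fin n → ℤ} (hγ : γ ∈ initialExponents n k) :
    Pi.single k b + γ ∈ middleExponents d k := by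
  have hk : (Pi.single k b + γ : Fin n → ℤ) k = b := by
    rw [Pi.add_apply, Pi.single_eq_same, hγ k le_rfl, add_zero]
  exact ⟨hk.symm ▸ hb, hk.symm ▸ hbd, add_mem (single_mem_initialExponents k.val.lt_succ_self b)
    (initialExponents_mono k.val.le_succ hγ)⟩

theorem middleExponents_mono {d e : ℕ} (h : d ≤ e) (k : Fin n) :
    middleExponents d k ⊆ middleExponents e k :=
  fun _ hβ => ⟨hβ.1, hβ.2.1.trans_le (Nat.cast_le.2 h), hβ.2.2⟩

theorem exists_single_add_of_mem_middleExponents {d : ℕ} {k : Fin n} {β : Fin n → ℤ}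
    (hβ : β ∈ middleExponents d k) :
    ∃ b : ℕ, 1 ≤ b ∧ b < d ∧ ∃ γ ∈ initialExponents n k, β = Pi.single k (b : ℤ) + γ := by
  have hb := Int.toNat_of_nonneg hβ.1.le
  have h0 := hβ.1
  have hd := hβ.2.1
  refine ⟨(β k).toNat, by omega, by omega, _, sub_single_mem_initialExponents hβ.2.2, ?_⟩
  rw [hb, add_sub_cancel]

variable {A : Type*} [Ring A] [Algebra F A]

namespace AffineHeckeCliffordFamily

variable (D : AffineHeckeCliffordFamily F ξ n A)

/-- The subalgebra of the elements that involve only the first `k` coordinates. -/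
def initialSubalgebra (k : ℕ) : Subalgebra F A :=
  Algebra.adjoin F (D.mon '' (initialExponents n k : Set (Fin n → ℤ)) ∪
    D.C '' {i | (i : ℕ) < k} ∪ D.T '' {i | (hi i : ℕ) < k})

variable {D} {k : ℕ} {x y : A}

theorem mon_mem_initialSubalgebra {α : Fin n → ℤ} (hα : α ∈ initialExponents n k) :
    D.mon α ∈ D.initialSubalgebra k :=
  Algebra.subset_adjoin (Or.inl (Or.inl ⟨α, hα, rfl⟩))

theorem C_mem_initialSubalgebra {i : Fin n} (hik : (i : ℕ) < k) :
    D.C i ∈ D.initialSubalgebra k :=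
  Algebra.subset_adjoin (Or.inl (Or.inr ⟨i, hik, rfl⟩))

theorem T_mem_initialSubalgebra {i : Fin (n - 1)} (hik : (hi i : ℕ) < k) :
    D.T i ∈ D.initialSubalgebra k :=
  Algebra.subset_adjoin (Or.inr ⟨i, hik, rfl⟩)

theorem Tstar_mem_initialSubalgebra {i : Fin (n - 1)} (hik : (hi i : ℕ) < k) :
    D.Tstar i ∈ D.initialSubalgebra k := by
  have hlo : (lo i : ℕ) < k := (Fin.lt_def.1 (lo_lt_hi i)).trans hik
  rw [HeckeCliffordFamily.Tstar, HeckeCliffordFamily.cliffordPair]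
  exact add_mem (T_mem_initialSubalgebra hik) (Subalgebra.smul_mem _
    (mul_mem (C_mem_initialSubalgebra hlo) (C_mem_initialSubalgebra hik)) _)

theorem initialSubalgebra_mono {m : ℕ} (h : k ≤ m) :
    D.initialSubalgebra k ≤ D.initialSubalgebra m :=
  Algebra.adjoin_mono (Set.union_subset_union (Set.union_subset_union
    (Set.image_mono (initialExponents_mono h)) (Set.image_mono fun _ hi => lt_of_lt_of_le hi h))
    (Set.image_mono fun _ hi => lt_of_lt_of_le hi h))

theorem commute_mon_single_of_mem_initialSubalgebra (hx : x ∈ D.initialSubalgebra k)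
    {j : Fin n} (hkj : k ≤ j) (e : ℤ) : Commute x (D.mon (Pi.single j e)) := by
  have hne {i : Fin n} (hik : (i : ℕ) < k) : (Pi.single j e : Fin n → ℤ) i = 0 :=
    Pi.single_eq_of_ne (Fin.ne_of_lt (hik.trans_le hkj)) _
  induction hx using Algebra.adjoin_induction with
  | mem x hx =>
    obtain (⟨α, -, rfl⟩ | ⟨i, hik, rfl⟩) | ⟨i, hik, rfl⟩ := hx
    · exact D.mon_commute_mon _ _
    · exact D.C_commute_mon (hne hik)
    · exact D.T_commute_mon (hne ((Fin.lt_def.1 (lo_lt_hi i)).trans hik)) (hne hik)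
  | algebraMap c => exact Algebra.commute_algebraMap_left c _
  | add x y _ _ hx hy => exact hx.add_left hy
  | mul x y _ _ hx hy => exact hx.mul_left hy

theorem mul_mem_monSpan_initialExponents (hx : x ∈ D.initialSubalgebra k)
    (hy : y ∈ D.monSpan (initialExponents n k : Set (Fin n → ℤ))) :
    x * y ∈ D.monSpan (initialExponents n k : Set (Fin n → ℤ)) := by
  induction hx using Algebra.adjoin_induction generalizing y with
  | mem x hx =>
    obtain (⟨α, hα, rfl⟩ | ⟨i, hik, rfl⟩) | ⟨i, hik, rfl⟩ := hx
    · exact mon_mul_mem_monSpan (fun β => add_mem hα) hy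
    · refine C_mul_mem_monSpan (fun β hβ j hj => ?_) hy
      rw [Function.update_of_ne (Fin.ne_of_gt (Fin.lt_def.2 (lt_of_lt_of_le hik hj))), hβ j hj]
    · refine T_mul_mem_monSpan (fun β hβ γ hγ j hj => ?_) hy
      have hhi : hi i < j := Fin.lt_def.2 (lt_of_lt_of_le hik hj)
      rw [hγ j ((lo_lt_hi i).trans hhi).ne' hhi.ne', hβ j hj]
  | algebraMap c =>
    rw [← Algebra.smul_def]
    exact smul_mem_monSpan c hy
  | add x x' _ _ hx hx' =>
    rw [add_mul]
    exact add_mem (hx hy) (hx' hy)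
  | mul x x' _ _ hx hx' =>
    rw [mul_assoc]
    exact hx (hx' hy)

theorem mul_mem_monSpan_middleExponents {d : ℕ} {k : Fin n} (hx : x ∈ D.initialSubalgebra k)
    (hy : y ∈ D.monSpan (middleExponents d k)) : x * y ∈ D.monSpan (middleExponents d k) := by
  refine mul_mem_monSpan_of_mon (fun β hβ => ?_) hy
  obtain ⟨b, hb, hbd, γ, hγ, rfl⟩ := exists_single_add_of_mem_middleExponents hβ
  rw [mon_add, (commute_mon_single_of_mem_initialSubalgebra hx le_rfl b).left_comm]
  exact mon_mul_mem_monSpan (fun δ hδ => single_add_mem_middleExponents (by omega) (by omega) hδ)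
    (mul_mem_monSpan_initialExponents hx (mon_mem_monSpan hγ))

theorem Tstar_mul_X_lo_mul (i : Fin (n - 1)) (x : A) : D.Tstar i * (D.X (lo i) * x) =
    (D.X (hi i) : A) * (D.Tstar i * x) - ξ • ((D.X (hi i) : A) * (D.cliffordPair i * x))
      - ξ • ((D.X (hi i) : A) * x) := by
  rw [← mul_assoc, Tstar_mul_X_lo, HeckeCliffordFamily.Tstar]
  simp only [add_mul, mul_add, sub_mul, mul_sub, smul_mul_assoc, mul_smul_comm, mul_assoc, one_mul,
    add_sub_cancel_right]

theorem Tstar_mul_mon_single_sub_mem (i : Fin (n - 1)) {d : ℕ} (hd : 1 ≤ d) :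
    D.Tstar i * D.mon (Pi.single (lo i) (d : ℤ))
      - D.mon (Pi.single (hi i) (d : ℤ)) * (D.T i - ξ • 1) ∈
      D.monSpan (middleExponents d (hi i)) := by
  induction d, hd using Nat.le_induction with
  | base =>
    rw [Nat.cast_one, mon_single_one, mon_single_one, Tstar_mul_X_lo, sub_self]
    exact zero_mem _
  | succ d hd ih =>
    have hX (l : Fin n) : D.mon (Pi.single l ((d + 1 : ℕ) : ℤ)) =
        D.X l * D.mon (Pi.single l (d : ℤ)) := by
      rw [Nat.cast_succ, add_comm, Pi.single_add, mon_add, mon_single_one]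
    have hmid (a : ℤ) : Pi.single (hi i) 1 + Pi.single (lo i) a ∈
        middleExponents (d + 1) (hi i) :=
      single_add_mem_middleExponents one_pos (by omega)
        (single_mem_initialExponents (lo_lt_hi i) a)
    rw [hX, hX, Tstar_mul_X_lo_mul, mul_assoc (D.X (hi i) : A), sub_right_comm, sub_right_comm _ _
      ((D.X (hi i) : A) * _), ← mul_sub, cliffordPair_mul_mon_single_lo, ← mul_assoc _ _
      (D.cliffordPair i), ← mon_single_one, ← mon_add, ← mon_add]
    refine sub_mem (sub_mem (mon_mul_mem_monSpan (fun β hβ => ?_) ih) (smul_mem_monSpan _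
      (mul_mem_monSpan (mon_mem_monSpan (hmid _)) (D.cliffordPair_mem i)))) (smul_mem_monSpan _
      (mon_mem_monSpan (hmid _)))
    have hβ1 := hβ.1
    have hβd := hβ.2.1
    refine ⟨?_, ?_, add_mem (single_mem_initialExponents (Nat.lt_succ_self _) 1) hβ.2.2⟩ <;>
      rw [Pi.add_apply, Pi.single_eq_same] <;> omega

theorem Tstar_mul_mem_monSpan_middleExponents {d : ℕ} {i : Fin (n - 1)}
    (hx : x ∈ D.monSpan (middleExponents d (lo i))) :
    D.Tstar i * x ∈ D.monSpan (middleExponents d (hi i)) := by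
  refine mul_mem_monSpan_of_mon (fun β hβ => ?_) hx
  obtain ⟨b, hb, hbd, γ, hγ, rfl⟩ := exists_single_add_of_mem_middleExponents hβ
  have hγhi : γ ∈ initialExponents n (hi i) := initialExponents_mono (lo_lt_hi i).le hγ
  have hsingle : D.Tstar i * D.mon (Pi.single (lo i) (b : ℤ)) ∈
      D.monSpan (middleExponents d (hi i)) := by
    rw [← sub_add_cancel (D.Tstar i * _) (D.mon (Pi.single (hi i) (b : ℤ)) * (D.T i - ξ • 1))]
    refine add_mem (monSpan_mono (middleExponents_mono hbd.le _)
      (Tstar_mul_mon_single_sub_mem i hb)) (mul_mem_monSpan (mon_mem_monSpan ?_)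
      (sub_mem (D.T_mem i) (Subalgebra.smul_mem _ (one_mem _) ξ)))
    rw [← add_zero (Pi.single _ _)]
    exact single_add_mem_middleExponents (by omega) (by omega) (zero_mem _)
  rw [add_comm, mon_add,
    (D.Tstar_commute_mon (hγ _ le_rfl) (hγhi _ le_rfl)).left_comm]
  exact mul_mem_monSpan_middleExponents (mon_mem_initialSubalgebra hγhi) hsingle

variable (D) in
/-- The property of `x` being `X_k ^ d` plus terms of intermediate degree in `X_k` plus a unit of
the finite subalgebra. -/
def IsMonicAt (d : ℕ) (k : Fin n) (x : A) : Prop :=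
  ∃ r ∈ D.monSpan (middleExponents d k), ∃ u : D.finiteSubalgebraˣ,
    x = D.mon (Pi.single k (d : ℤ)) + r + (u : D.finiteSubalgebra)

theorem isMonicAt_sum {d : ℕ} {aa : ℕ → F} (hd : 1 ≤ d) (had : aa d = 1) (ha0 : aa 0 ≠ 0)
    (k : Fin n) : D.IsMonicAt d k (∑ i ∈ Finset.range (d + 1), aa i • (D.X k : A) ^ i) := by
  refine ⟨∑ i ∈ Finset.Ico 1 d, aa i • (D.X k : A) ^ i, ?_,
    Units.map (algebraMap F D.finiteSubalgebra).toMonoidHom (Units.mk0 _ ha0), ?_⟩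
  · refine Submodule.sum_mem _ fun i hi => smul_mem_monSpan _ ?_
    rw [Finset.mem_Ico] at hi
    rw [← mon_single_natCast, ← add_zero (Pi.single _ _)]
    exact mon_mem_monSpan (single_add_mem_middleExponents (by omega) (by omega) (zero_mem _))
  · have hunit : ((algebraMap F D.finiteSubalgebra (aa 0) : D.finiteSubalgebra) : A) = aa 0 • 1 :=
      Algebra.algebraMap_eq_smul_one _
    change _ = _ + ((algebraMap F D.finiteSubalgebra (aa 0) : D.finiteSubalgebra) : A)
    rw [hunit, Finset.sum_range_succ, had, one_smul, mon_single_natCast, Finset.range_eq_Ico,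
      Finset.sum_eq_sum_Ico_succ_bot hd, pow_zero]
    abel

theorem IsMonicAt.Tstar_mul_mul_T {d : ℕ} (hd : 1 ≤ d) {i : Fin (n - 1)}
    (hx : D.IsMonicAt d (lo i) x) : D.IsMonicAt d (hi i) (D.Tstar i * x * D.T i) := by
  obtain ⟨r, hr, u, rfl⟩ := hx
  let t : D.finiteSubalgebraˣ :=
    heckeUnit (R := D.finiteSubalgebra) (ξ := ξ) (U := ⟨D.T i, D.T_mem i⟩) (Subtype.ext (D.T_sq i))
  let tstar : D.finiteSubalgebraˣ :=
    heckeUnit (R := D.finiteSubalgebra) (ξ := ξ) (U := ⟨D.Tstar i, D.Tstar_mem i⟩)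
      (Subtype.ext (D.Tstar_sq i))
  refine ⟨_, mul_mem_monSpan (add_mem (Tstar_mul_mon_single_sub_mem i hd)
    (Tstar_mul_mem_monSpan_middleExponents hr)) (D.T_mem i), tstar * u * t, ?_⟩
  have hcancel : D.mon (Pi.single (hi i) (d : ℤ)) * (D.T i - ξ • 1) * D.T i =
      D.mon (Pi.single (hi i) (d : ℤ)) := by
    rw [mul_assoc, hecke_sub_mul (D.T_sq i), mul_one]
  change _ = _ + _ + D.Tstar i * (u : D.finiteSubalgebra) * D.T i
  rw [add_mul _ _ (D.T i), sub_mul, hcancel]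
  simp only [mul_add, add_mul]
  abel

variable (D) in
/-- The elements `f_{k+1}` attached to the polynomial with coefficients `aa 0, …, aa d`, with the
junk value `0` for `k ≥ n`. -/
def fSeq (d : ℕ) (aa : ℕ → F) : ℕ → A
  | 0 => if h : 0 < n then ∑ i ∈ Finset.range (d + 1), aa i • (D.X ⟨0, h⟩ : A) ^ i else 0
  | k + 1 => if h : k < n - 1 then D.Tstar ⟨k, h⟩ * fSeq d aa k * D.T ⟨k, h⟩ else 0

variable {d : ℕ} {aa : ℕ → F}

theorem isMonicAt_fSeq (hd : 1 ≤ d) (had : aa d = 1) (ha0 : aa 0 ≠ 0) (k : Fin n) :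
    D.IsMonicAt d k (D.fSeq d aa k) := by
  obtain ⟨k, hk⟩ := k
  induction k with
  | zero =>
    rw [fSeq, dif_pos hk]
    exact isMonicAt_sum hd had ha0 _
  | succ k ih =>
    have hk' : k < n - 1 := by omega
    rw [fSeq, dif_pos hk']
    exact (ih (by omega)).Tstar_mul_mul_T (i := ⟨k, hk'⟩) hd

theorem fSeq_mem_initialSubalgebra (k : ℕ) : D.fSeq d aa k ∈ D.initialSubalgebra (k + 1) := by
  induction k with
  | zero =>
    rw [fSeq]
    split_ifs with h
    · refine sum_mem fun i _ => Subalgebra.smul_mem _ (pow_mem ?_ i) _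
      rw [← mon_single_one]
      exact mon_mem_initialSubalgebra (single_mem_initialExponents one_pos 1)
    · exact zero_mem _
  | succ k ih =>
    rw [fSeq]
    split_ifs with h
    · have hk : (hi ⟨k, h⟩ : ℕ) < k + 1 + 1 := Nat.lt_succ_self _
      exact mul_mem (mul_mem (Tstar_mem_initialSubalgebra hk)
        (initialSubalgebra_mono (Nat.le_succ _) ih)) (T_mem_initialSubalgebra hk)
    · exact zero_mem _

end AffineHeckeCliffordFamily

end Sequence

section Weight

variable {n d : ℕ}

/-- The distance of an exponent from the interval `[0, d)`. -/
def boxDistance (d : ℕ) (e : ℤ) : ℕ :=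
  if e < 0 then (-e).toNat else if e < d then 0 else (e - d + 1).toNat

/-- The leading exponent of `X_k ^ a * f_k` in the variable `X_k`. -/
def leadingDegree (d : ℕ) (a : ℤ) : ℤ := if 0 ≤ a then a + d else a

theorem boxDistance_add_lt_leadingDegree (a : ℤ) {b : ℤ} (hb : 0 < b) (hbd : b < d) :
    boxDistance d (a + b) < boxDistance d (leadingDegree d a) := by
  unfold boxDistance leadingDegree
  split_ifs <;> omega

theorem boxDistance_lt_add (hd : 1 ≤ d) {a : ℤ} (ha : 0 ≤ a) :
    boxDistance d a < boxDistance d (a + d) := by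
  unfold boxDistance
  split_ifs <;> omega

theorem boxDistance_add_lt (hd : 1 ≤ d) {a : ℤ} (ha : a < 0) :
    boxDistance d (a + d) < boxDistance d a := by
  unfold boxDistance
  split_ifs <;> omega

/-- The weight of an exponent vector, compared lexicographically from the last coordinate. -/
def expWeight (d : ℕ) (β : Fin n → ℤ) : Colex (Fin n → ℕ) := toColex fun i => boxDistance d (β i)

theorem expWeight_lt_iff {β γ : Fin n → ℤ} : expWeight d β < expWeight d γ ↔
    ∃ i, (∀ j, i < j → boxDistance d (β j) = boxDistance d (γ j)) ∧
      boxDistance d (β i) < boxDistance d (γ i) := Iff.rfl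

theorem expWeight_lt_of_boxDistance_lt {k : Fin n} {β γ : Fin n → ℤ}
    (hβ : β ∈ initialExponents n (k + 1)) (hγ : γ ∈ initialExponents n (k + 1))
    (h : boxDistance d (β k) < boxDistance d (γ k)) : expWeight d β < expWeight d γ :=
  expWeight_lt_iff.2 ⟨k, fun j hj => by rw [hβ j hj, hγ j hj], h⟩

theorem expWeight_single_add_lt {k : Fin n} {β γ : Fin n → ℤ} (hβ : β ∈ initialExponents n k)
    (hγ : γ ∈ initialExponents n k) (c : ℤ) (h : expWeight d β < expWeight d γ) :
    expWeight d (Pi.single k c + β) < expWeight d (Pi.single k c + γ) := by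
  obtain ⟨i, heq, hlt⟩ := expWeight_lt_iff.1 h
  have hik : i < k := by
    by_contra hki
    rw [hβ i (not_lt.1 hki), hγ i (not_lt.1 hki)] at hlt
    exact hlt.false
  refine expWeight_lt_iff.2 ⟨i, fun j hj => ?_, ?_⟩
  · obtain rfl | hjk := eq_or_ne j k
    · rw [Pi.add_apply, Pi.add_apply, hβ j le_rfl, hγ j le_rfl]
    · simpa [hjk] using heq j hj
  · simpa [hik.ne] using hlt

/-- The exponents on the first `k` coordinates whose weight is smaller than that of `lam`. -/
def lowerExponents (d k : ℕ) (lam : Fin n → ℤ) : Set (Fin n → ℤ) :=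
  {β | β ∈ initialExponents n k ∧ expWeight d β < expWeight d lam}

/-- The exponent of the leading term of `X^α f_Z`. -/
def leadingExponent (d : ℕ) (α : Fin n → ℤ) (Z : Finset (Fin n)) (i : Fin n) : ℤ :=
  if i ∈ Z then leadingDegree d (α i) else α i

theorem leadingExponent_zero_empty : leadingExponent d (0 : Fin n → ℤ) ∅ = 0 :=
  funext fun _ => if_neg (Finset.notMem_empty _)

theorem leadingExponent_mem_initialExponents {k : ℕ} {α : Fin n → ℤ} {Z : Finset (Fin n)}
    (hα : α ∈ initialExponents n k) (hZ : ∀ z ∈ Z, (z : ℕ) < k) :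
    leadingExponent d α Z ∈ initialExponents n k := fun j hj => by
  rw [leadingExponent, if_neg fun hjZ => (hZ j hjZ).not_ge hj, hα j hj]

theorem leadingExponent_of_mem (α : Fin n → ℤ) {Z : Finset (Fin n)} {k : Fin n} (hk : k ∈ Z) :
    leadingExponent d α Z = Pi.single k (leadingDegree d (α k)) +
      leadingExponent d (α - Pi.single k (α k)) (Z.erase k) := by
  ext j
  obtain rfl | hjk := eq_or_ne j k
  · simp [leadingExponent, hk]
  · simp [leadingExponent, hjk]

theorem leadingExponent_of_notMem (α : Fin n → ℤ) {Z : Finset (Fin n)} {k : Fin n} (hk : k ∉ Z) :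
    leadingExponent d α Z = Pi.single k (α k) +
      leadingExponent d (α - Pi.single k (α k)) Z := by
  ext j
  obtain rfl | hjk := eq_or_ne j k
  · simp [leadingExponent, hk]
  · simp [leadingExponent, hjk]

theorem leadingExponent_injective :
    Function.Injective fun p : PiIdx n d => leadingExponent d p.1.1 p.1.2 := by
  rintro ⟨⟨α, Z⟩, hα⟩ ⟨⟨β, Y⟩, hβ⟩ h
  have hcoord (i : Fin n) : (i ∈ Z ↔ i ∈ Y) ∧ α i = β i := by
    have hi : leadingExponent d α Z i = leadingExponent d β Y i := congrFun h i
    have hαi : i ∉ Z → 0 ≤ α i ∧ α i < d := hα i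
    have hβi : i ∉ Y → 0 ≤ β i ∧ β i < d := hβ i
    grind [leadingExponent, leadingDegree]
  obtain rfl : Z = Y := Finset.ext fun i => (hcoord i).1
  obtain rfl : α = β := funext fun i => (hcoord i).2
  rfl

theorem leadingExponent_surjective :
    Function.Surjective fun p : PiIdx n d => leadingExponent d p.1.1 p.1.2 := by
  intro lam
  refine ⟨⟨⟨fun i => if (d : ℤ) ≤ lam i then lam i - d else lam i,
    Finset.univ.filter fun i => lam i < 0 ∨ (d : ℤ) ≤ lam i⟩, fun i hi => ?_⟩, funext fun i => ?_⟩
  · rw [Finset.mem_filter_univ] at hi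
    dsimp only
    split_ifs <;> omega
  · simp only [leadingExponent, leadingDegree, Finset.mem_filter_univ]
    split_ifs <;> omega

end Weight

section Triangular

variable {F} {ξ : F} {n d : ℕ} {aa : ℕ → F} {A : Type*} [Ring A] [Algebra F A]

theorem sort_insert_of_forall_lt {ι : Type*} [LinearOrder ι] {Z : Finset ι} {k : ι}
    (hZ : ∀ z ∈ Z, z < k) : (insert k Z).sort = Z.sort ++ [k] := by
  have hlt : (Z.sort ++ [k]).Pairwise (· < ·) :=
    List.pairwise_append.2 ⟨Z.sortedLT_sort.pairwise, List.pairwise_singleton _ _, fun a ha b hb =>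
      List.mem_singleton.1 hb ▸ hZ a ((Finset.mem_sort _).1 ha)⟩
  have hset : insert k Z = (Z.sort ++ [k]).toFinset := by
    ext a
    simp
  rw [hset]
  exact (List.toFinset_sort (· ≤ ·) (hlt.imp ne_of_lt)).2 (hlt.imp le_of_lt)

namespace AffineHeckeCliffordFamily

variable {D : AffineHeckeCliffordFamily F ξ n A}

variable (D d aa) in
/-- The product of the `f_z` over `z ∈ Z`, in increasing order. -/
def fProd (Z : Finset (Fin n)) : A := ((Z.sort (· ≤ ·)).map fun z : Fin n => D.fSeq d aa z).prod

theorem fProd_empty : D.fProd d aa ∅ = 1 := by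
  rw [fProd, Finset.sort_empty, List.map_nil, List.prod_nil]

theorem fProd_insert {Z : Finset (Fin n)} {k : Fin n} (hZ : ∀ z ∈ Z, z < k) :
    D.fProd d aa (insert k Z) = D.fProd d aa Z * D.fSeq d aa k := by
  rw [fProd, sort_insert_of_forall_lt hZ, List.map_append, List.prod_append, List.map_singleton,
    List.prod_singleton, fProd]

theorem fProd_mem_initialSubalgebra {Z : Finset (Fin n)} {k : ℕ} (hZ : ∀ z ∈ Z, (z : ℕ) < k) :
    D.fProd d aa Z ∈ D.initialSubalgebra k := by
  refine list_prod_mem fun x hx => ?_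
  obtain ⟨z, hz, rfl⟩ := List.mem_map.1 hx
  exact initialSubalgebra_mono (Nat.succ_le_of_lt (hZ z ((Finset.mem_sort _).1 hz)))
    (fSeq_mem_initialSubalgebra z)

variable (D d) in
/-- The property of `x` being a monomial with exponent `lam` times a unit of the finite
subalgebra, plus terms of lower weight, all on the first `k` coordinates. -/
def HasLead (k : ℕ) (lam : Fin n → ℤ) (x : A) : Prop :=
  ∃ u : D.finiteSubalgebraˣ,
    x - D.mon lam * (u : D.finiteSubalgebra) ∈ D.monSpan (lowerExponents d k lam)

theorem HasLead.add {k : ℕ} {lam : Fin n → ℤ} {x y : A} (hx : D.HasLead d k lam x)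
    (hy : y ∈ D.monSpan (lowerExponents d k lam)) : D.HasLead d k lam (x + y) := by
  obtain ⟨u, hu⟩ := hx
  refine ⟨u, ?_⟩
  rw [add_sub_right_comm]
  exact add_mem hu hy

theorem HasLead.mul_unit {k : ℕ} {lam : Fin n → ℤ} {x : A} (hx : D.HasLead d k lam x)
    (v : D.finiteSubalgebraˣ) : D.HasLead d k lam (x * (v : D.finiteSubalgebra)) := by
  obtain ⟨u, hu⟩ := hx
  refine ⟨u * v, ?_⟩
  rw [Units.val_mul, Subalgebra.coe_mul, ← mul_assoc, ← sub_mul]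
  exact mul_mem_monSpan hu (SetLike.coe_mem _)

variable {k : Fin n} {lam : Fin n → ℤ} {x y : A}

theorem single_add_mem_initialExponents {β : Fin n → ℤ} (hβ : β ∈ initialExponents n k) (c : ℤ) :
    Pi.single k c + β ∈ initialExponents n (k + 1) :=
  add_mem (single_mem_initialExponents k.val.lt_succ_self c)
    (initialExponents_mono k.val.le_succ hβ)

theorem HasLead.mon_single_mul (hlam : lam ∈ initialExponents n k) (hx : D.HasLead d k lam x)
    (c : ℤ) : D.HasLead d (k + 1) (Pi.single k c + lam) (D.mon (Pi.single k c) * x) := by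
  obtain ⟨u, hu⟩ := hx
  refine ⟨u, ?_⟩
  rw [mon_add, mul_assoc, ← mul_sub]
  exact mon_mul_mem_monSpan (fun β hβ => ⟨single_add_mem_initialExponents hβ.1 c,
    expWeight_single_add_lt hβ.1 hlam c hβ.2⟩) hu

theorem mon_single_mul_mem_monSpan_lowerExponents (hlam : lam ∈ initialExponents n k)
    {S : Set (Fin n → ℤ)} {a c : ℤ} (hS : ∀ β ∈ S, β ∈ initialExponents n (k + 1) ∧
      boxDistance d (a + β k) < boxDistance d c) (hx : x ∈ D.monSpan S) :
    D.mon (Pi.single k a) * x ∈ D.monSpan (lowerExponents d (k + 1) (Pi.single k c + lam)) := by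
  refine mon_mul_mem_monSpan (fun β hβ => ?_) hx
  have hmem := add_mem (single_mem_initialExponents k.val.lt_succ_self a) (hS β hβ).1
  refine ⟨hmem, expWeight_lt_of_boxDistance_lt hmem (single_add_mem_initialExponents hlam c) ?_⟩
  rw [Pi.add_apply, Pi.add_apply, Pi.single_eq_same, Pi.single_eq_same, hlam k le_rfl, add_zero]
  exact (hS β hβ).2

theorem mem_monSpan_initialExponents (hx : x ∈ D.initialSubalgebra k) :
    x ∈ D.monSpan (initialExponents n k : Set (Fin n → ℤ)) := by
  have h := mul_mem_monSpan_initialExponents hx (mon_mem_monSpan (zero_mem _))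
  rwa [mon_zero, mul_one] at h

/- For `a ≥ 0` the term `X_k ^ d` of `f_k` provides the leading term, for `a < 0` the unit does. -/
theorem HasLead.mon_single_mul_mul (hd : 1 ≤ d) (hlam : lam ∈ initialExponents n k)
    (hy : y ∈ D.initialSubalgebra k) (hlead : D.HasLead d k lam y) (hx : D.IsMonicAt d k x)
    (a : ℤ) : D.HasLead d (k + 1) (Pi.single k (leadingDegree d a) + lam)
      (D.mon (Pi.single k a) * (y * x)) := by
  obtain ⟨r, hr, u, rfl⟩ := hx
  have hexpand : D.mon (Pi.single k a) * (y * (D.mon (Pi.single k (d : ℤ)) + r +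
      (u : D.finiteSubalgebra))) = D.mon (Pi.single k (a + d)) * y +
      D.mon (Pi.single k a) * y * (u : D.finiteSubalgebra) + D.mon (Pi.single k a) * (y * r) := by
    rw [mul_add, mul_add, mul_add, (commute_mon_single_of_mem_initialSubalgebra hy le_rfl d).eq,
      mul_add, ← mul_assoc, ← mon_add, ← Pi.single_add, mul_assoc _ y, add_right_comm]
  have hmiddle : D.mon (Pi.single k a) * (y * r) ∈
      D.monSpan (lowerExponents d (k + 1) (Pi.single k (leadingDegree d a) + lam)) :=
    mon_single_mul_mem_monSpan_lowerExponents hlam (fun β hβ =>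
      ⟨hβ.2.2, boxDistance_add_lt_leadingDegree a hβ.1 hβ.2.1⟩)
      (mul_mem_monSpan_middleExponents hy hr)
  have hlower {b c : ℤ} (hbc : boxDistance d b < boxDistance d c) : D.mon (Pi.single k b) * y ∈
      D.monSpan (lowerExponents d (k + 1) (Pi.single k c + lam)) :=
    mon_single_mul_mem_monSpan_lowerExponents hlam (fun β hβ =>
      ⟨initialExponents_mono k.val.le_succ hβ, by rwa [hβ k le_rfl, add_zero]⟩)
      (mem_monSpan_initialExponents hy)
  rw [hexpand]
  refine HasLead.add ?_ hmiddle
  obtain ha | ha := le_or_gt 0 a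
  · rw [leadingDegree, if_pos ha]
    exact (hlead.mon_single_mul hlam _).add
      (mul_mem_monSpan (hlower (boxDistance_lt_add hd ha)) (SetLike.coe_mem _))
  · rw [leadingDegree, if_neg ha.not_ge, add_comm (D.mon _ * _)]
    exact ((hlead.mon_single_mul hlam a).mul_unit u).add (hlower (boxDistance_add_lt hd ha))

theorem hasLead_mon_mul_fProd (hd : 1 ≤ d) (had : aa d = 1) (ha0 : aa 0 ≠ 0) {k : ℕ} (hk : k ≤ n)
    {α : Fin n → ℤ} (hα : α ∈ initialExponents n k) {Z : Finset (Fin n)}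
    (hZ : ∀ z ∈ Z, (z : ℕ) < k) :
    D.HasLead d k (leadingExponent d α Z) (D.mon α * D.fProd d aa Z) := by
  induction k generalizing α Z with
  | zero =>
    obtain rfl : α = 0 := funext fun i => hα i (Nat.zero_le _)
    obtain rfl : Z = ∅ := Finset.eq_empty_of_forall_notMem fun z hz => Nat.not_lt_zero _ (hZ z hz)
    refine ⟨1, ?_⟩
    rw [leadingExponent_zero_empty, fProd_empty, Units.val_one, Subalgebra.coe_one, sub_self]
    exact zero_mem _
  | succ m ih =>
    obtain ⟨k, rfl⟩ : ∃ k : Fin n, (k : ℕ) = m := ⟨⟨m, hk⟩, rfl⟩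
    have hα' := sub_single_mem_initialExponents hα
    have hlt {z} (hz : z ∈ Z) (hzk : z ≠ k) : z < k :=
      lt_of_le_of_ne (Nat.lt_succ_iff.1 (hZ z hz)) hzk
    have hmon : D.mon α = D.mon (Pi.single k (α k)) * D.mon (α - Pi.single k (α k)) := by
      rw [← mon_add, add_sub_cancel]
    by_cases hkZ : k ∈ Z
    · have hZ' : ∀ z ∈ Z.erase k, z < k := fun z hz =>
        hlt (Finset.mem_of_mem_erase hz) (Finset.ne_of_mem_erase hz)
      rw [leadingExponent_of_mem α hkZ, ← Finset.insert_erase hkZ, fProd_insert hZ',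
        Finset.erase_insert (Finset.notMem_erase k Z), hmon, mul_assoc, ← mul_assoc (D.mon (α - _))]
      exact (ih k.2.le hα' hZ').mon_single_mul_mul hd
        (leadingExponent_mem_initialExponents hα' hZ')
        (mul_mem (mon_mem_initialSubalgebra hα') (fProd_mem_initialSubalgebra hZ'))
        (isMonicAt_fSeq hd had ha0 k) (α k)
    · have hZ' : ∀ z ∈ Z, z < k := fun z hz => hlt hz (ne_of_mem_of_not_mem hz hkZ)
      rw [leadingExponent_of_notMem α hkZ, hmon, mul_assoc]
      exact (ih k.2.le hα' hZ').mon_single_mul (leadingExponent_mem_initialExponents hα' hZ') _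

end AffineHeckeCliffordFamily

end Triangular

section Comparison

variable {F} {q : F} {n : ℕ}

theorem mon_standardFamily (α : Fin n → ℤ) : (standardFamily q n).mon α = Xmon F q α := by
  refine congrArg List.prod (List.map_congr_left fun i _ => ?_)
  rw [XZ]
  split_ifs with h
  · obtain ⟨m, hm⟩ := Int.eq_ofNat_of_zero_le h
    rw [hm, zpow_natCast, Units.val_pow_eq_pow_val]
    rfl
  · obtain ⟨m, hm⟩ := Int.eq_ofNat_of_zero_le (a := -α i) (by omega)
    rw [hm, ← neg_neg (α i), hm, zpow_neg, zpow_natCast, ← inv_pow, Units.val_pow_eq_pow_val]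
    rfl

theorem fSeq_standardFamily (d : ℕ) (aa : ℕ → F) (k : ℕ) :
    (standardFamily q n).fSeq d aa k = fseq F q n d aa k := by
  induction k with
  | zero => rfl
  | succ k ih =>
    rw [AffineHeckeCliffordFamily.fSeq, fseq, ih]
    rfl

theorem fProd_standardFamily (d : ℕ) (aa : ℕ → F) (Z : Finset (Fin n)) :
    (standardFamily q n).fProd d aa Z = fZ F q n d aa Z := by
  rw [AffineHeckeCliffordFamily.fProd, fZ]
  simp only [fSeq_standardFamily, List.pure_def, List.bind_eq_flatMap, ← List.map_eq_flatMap,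
    List.map_map]
  rfl

end Comparison

section Freeness

variable {F} {q : F} {n d : ℕ} {aa : ℕ → F}

theorem exists_unit_op_smul_eq_mul {A : Type*} [Ring A] [Algebra F A] {B : Subalgebra F A}
    (u : Bˣ) : ∃ v : (B.op)ˣ, ∀ x : A, (v : B.op) • x = x * (u : B) :=
  ⟨⟨⟨.op (u : B), (u : B).2⟩, ⟨.op (↑u⁻¹ : B), (↑u⁻¹ : B).2⟩,
    Subtype.ext (congrArg (fun b : B => MulOpposite.op (b : A)) u.inv_mul),
    Subtype.ext (congrArg (fun b : B => MulOpposite.op (b : A)) u.mul_inv)⟩, fun _ => rfl⟩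

theorem exists_Xmon_mul_fZ_sub_mem_span (hd : 1 ≤ d) (had : aa d = 1) (ha0 : aa 0 ≠ 0)
    (α : Fin n → ℤ) (Z : Finset (Fin n)) :
    ∃ u : ((standardFamily q n).finiteSubalgebra.op)ˣ,
      Xmon F q α * fZ F q n d aa Z -
        (u : (standardFamily q n).finiteSubalgebra.op) • monBasis q n (leadingExponent d α Z) ∈
      Submodule.span (standardFamily q n).finiteSubalgebra.op
        (monBasis q n '' {β | expWeight d β < expWeight d (leadingExponent d α Z)}) := by
  obtain ⟨u, hu⟩ := AffineHeckeCliffordFamily.hasLead_mon_mul_fProd (D := standardFamily q n)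
    hd had ha0 le_rfl (fun j hj => absurd j.2 hj.not_gt : α ∈ initialExponents n n)
    (fun z (_ : z ∈ Z) => z.2)
  obtain ⟨v, hv⟩ := exists_unit_op_smul_eq_mul u
  rw [mon_standardFamily, fProd_standardFamily] at hu
  refine ⟨v, ?_⟩
  rw [hv, coe_monBasis]
  exact AffineHeckeCliffordFamily.monSpan_mono (fun β hβ => hβ.2) hu

theorem free_over_finite_subalgebra_general (F : Type) [Field F] (q : F) (_hq : q ≠ 0) (n : ℕ)
    (d : ℕ) (aa : ℕ → F) (hd : 1 ≤ d) (had : aa d = 1) (ha0 : aa 0 ≠ 0) :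
    ∀ h : H F q n, ∃! c : PiIdx n d →₀ ↥(Hfin F q n),
      h = c.sum fun p b => Xmon F q p.1.1 * fZ F q n d aa p.1.2 * (b : H F q n) := by
  intro h
  choose u hu using fun p : PiIdx n d =>
    exists_Xmon_mul_fZ_sub_mem_span (q := q) hd had ha0 p.1.1 p.1.2
  exact existsUnique_eq_finsupp_sum_mul_of_triangular (monBasis q n) (expWeight d)
    ⟨leadingExponent_injective, leadingExponent_surjective⟩ hu h

end Freeness

/-- **Freeness of `H_n` over `H^fn_n`** (Lemma `hardb` of Brundan–Kleshchev):
`H_n` is a free right `H^fn_n`-module with basis `{X^α f_Z : (α, Z) ∈ Π_n}`, i.e.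
every element of `H_n` has a unique expression `∑ X^α f_Z · b_{(α,Z)}` with
coefficients `b_{(α,Z)} ∈ H^fn_n` (almost all zero). -/
theorem free_over_finite_subalgebra
    (F : Type) [Field F] [IsAlgClosed F] (h2 : (2 : F) ≠ 0)
    (q : F) (hq : GoodParam F q) (n : ℕ)
    (d : ℕ) (aa : ℕ → F) (hf : GoodPoly F d aa) :
    ∀ h : H F q n, ∃! c : PiIdx n d →₀ ↥(Hfin F q n),
      h = c.sum fun p b => Xmon F q p.1.1 * fZ F q n d aa p.1.2 * (b : H F q n) := by
  obtain ⟨hd, had, hsymm, -⟩ := hf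
  have ha0 : aa 0 ≠ 0 := left_ne_zero_of_mul_eq_one ((hsymm d le_rfl).symm.trans had)
  exact free_over_finite_subalgebra_general F q hq.1 n d aa hd had ha0

end HC
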